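/- arXiv:math/0506272 — 5 statements merged into one kernel-verified Lean document; each statement's English description precedes it below -/
import Mathlib

section
/- Let H be a quasi-Hopf algebra, B a right H-comodule algebra, and v : H → B a morphism of right H-comodule algebras. Define E : B → B by E(b) = v(q¹)b₍₀₎v(βS(q²b₍₁₎)), set A = E(B), h▷b = E(v(h)b), and a*a′ = E(aa′) for a, a′ ∈ A. Then for all a, a′ ∈ A and h, h′ ∈ H: ((x¹▷a)*(x²h₁▷a′))·v(x³h₂h′) = a·v(h)·a′·v(h′) in B. In other words, the map Ψ : A#H → B, Ψ(a#h) = a v(h), is multiplicative. -/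
open TensorProduct BigOperators

/-- A quasi-bialgebra in the sense of Drinfeld. -/
structure QuasiBialgebra (k H : Type*) [Field k] [Ring H] [Algebra k H] where
  comul : H →ₐ[k] H ⊗[k] H
  counit : H →ₐ[k] k
  Phi : H ⊗[k] (H ⊗[k] H)
  PhiInv : H ⊗[k] (H ⊗[k] H)
  Phi_mul_inv : Phi * PhiInv = 1
  inv_mul_Phi : PhiInv * Phi = 1
  comul_coassoc : ∀ h : H,
    (Algebra.TensorProduct.map (AlgHom.id k H) comul) (comul h)
      = Phi * (Algebra.TensorProduct.assoc k k k H H H)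
          ((Algebra.TensorProduct.map comul (AlgHom.id k H)) (comul h)) * PhiInv
  counit_comul_right : ∀ h : H,
    (Algebra.TensorProduct.map (AlgHom.id k H) counit) (comul h) = h ⊗ₜ[k] (1 : k)
  counit_comul_left : ∀ h : H,
    (Algebra.TensorProduct.map counit (AlgHom.id k H)) (comul h) = (1 : k) ⊗ₜ[k] h
  pentagon :
    ((1 : H) ⊗ₜ[k] Phi)
      * (Algebra.TensorProduct.map (AlgHom.id k H)
          (((Algebra.TensorProduct.assoc k k k H H H).toAlgHom).comp
            (Algebra.TensorProduct.map comul (AlgHom.id k H)))) Phi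
      * (Algebra.TensorProduct.map (AlgHom.id k H)
          (Algebra.TensorProduct.map (AlgHom.id k H)
            (Algebra.TensorProduct.includeLeft : H →ₐ[k] H ⊗[k] H))) Phi
    = (Algebra.TensorProduct.map (AlgHom.id k H)
          (Algebra.TensorProduct.map (AlgHom.id k H) comul)) Phi
      * (Algebra.TensorProduct.assoc k k k H H (H ⊗[k] H))
          ((Algebra.TensorProduct.map comul (AlgHom.id k (H ⊗[k] H))) Phi)
  counit_Phi : (Algebra.TensorProduct.map (AlgHom.id k H)
      (Algebra.TensorProduct.map counit (AlgHom.id k H))) Phi = 1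

/-- A quasi-Hopf algebra: a quasi-bialgebra with antipode `S` (a bijective algebra
anti-automorphism with inverse `Sinv`) and elements `alpha`, `beta`, normalized so that
`counit alpha = counit beta = 1`.  Identities involving Sweedler components are stated
universally over all finite representations of the relevant tensors. -/
structure QuasiHopfAlgebra (k H : Type*) [Field k] [Ring H] [Algebra k H] extends
    QuasiBialgebra k H where
  alpha : H
  beta : H
  S : H →ₗ[k] H
  Sinv : H →ₗ[k] H
  S_one : S 1 = 1
  S_mul : ∀ a b : H, S (a * b) = S b * S a
  Sinv_S : ∀ h : H, Sinv (S h) = h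
  S_Sinv : ∀ h : H, S (Sinv h) = h
  antipode_left : ∀ h : H, ∀ (n : ℕ) (d1 d2 : Fin n → H),
    comul h = ∑ i, d1 i ⊗ₜ[k] d2 i →
    ∑ i, S (d1 i) * alpha * d2 i = counit h • alpha
  antipode_right : ∀ h : H, ∀ (n : ℕ) (d1 d2 : Fin n → H),
    comul h = ∑ i, d1 i ⊗ₜ[k] d2 i →
    ∑ i, d1 i * beta * S (d2 i) = counit h • beta
  antipode_Phi : ∀ (n : ℕ) (X1 X2 X3 : Fin n → H),
    Phi = ∑ i, X1 i ⊗ₜ[k] (X2 i ⊗ₜ[k] X3 i) →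
    ∑ i, X1 i * beta * S (X2 i) * alpha * X3 i = 1
  antipode_PhiInv : ∀ (n : ℕ) (x1 x2 x3 : Fin n → H),
    PhiInv = ∑ i, x1 i ⊗ₜ[k] (x2 i ⊗ₜ[k] x3 i) →
    ∑ i, S (x1 i) * alpha * x2 i * beta * S (x3 i) = 1
  counit_alpha : counit alpha = 1
  counit_beta : counit beta = 1
/-- A right `H`-comodule algebra over a quasi-bialgebra `Q`. -/
structure RightComoduleAlgebra {k H : Type*} [Field k] [Ring H] [Algebra k H]
    (Q : QuasiBialgebra k H) (B : Type*) [Ring B] [Algebra k B] where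
  coact : B →ₐ[k] B ⊗[k] H
  PhiRho : B ⊗[k] (H ⊗[k] H)
  PhiRhoInv : B ⊗[k] (H ⊗[k] H)
  PhiRho_mul_inv : PhiRho * PhiRhoInv = 1
  inv_mul_PhiRho : PhiRhoInv * PhiRho = 1
  coact_coassoc : ∀ b : B,
    PhiRho * (Algebra.TensorProduct.assoc k k k B H H)
        ((Algebra.TensorProduct.map coact (AlgHom.id k H)) (coact b))
      = (Algebra.TensorProduct.map (AlgHom.id k B) Q.comul) (coact b) * PhiRho
  pentagon :
    ((1 : B) ⊗ₜ[k] Q.Phi)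
      * (Algebra.TensorProduct.map (AlgHom.id k B)
          (((Algebra.TensorProduct.assoc k k k H H H).toAlgHom).comp
            (Algebra.TensorProduct.map Q.comul (AlgHom.id k H)))) PhiRho
      * (Algebra.TensorProduct.map (AlgHom.id k B)
          (Algebra.TensorProduct.map (AlgHom.id k H)
            (Algebra.TensorProduct.includeLeft : H →ₐ[k] H ⊗[k] H))) PhiRho
    = (Algebra.TensorProduct.map (AlgHom.id k B)
          (Algebra.TensorProduct.map (AlgHom.id k H) Q.comul)) PhiRho
      * (Algebra.TensorProduct.assoc k k k B H (H ⊗[k] H))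
          ((Algebra.TensorProduct.map coact (AlgHom.id k (H ⊗[k] H))) PhiRho)
  counit_coact : ∀ b : B,
    (Algebra.TensorProduct.map (AlgHom.id k B) Q.counit) (coact b) = b ⊗ₜ[k] (1 : k)
  counit_PhiRho_mid : (Algebra.TensorProduct.map (AlgHom.id k B)
      (Algebra.TensorProduct.map Q.counit (AlgHom.id k H))) PhiRho = 1
  counit_PhiRho_right : (Algebra.TensorProduct.map (AlgHom.id k B)
      (Algebra.TensorProduct.map (AlgHom.id k H) Q.counit)) PhiRho = 1

/-- `v : H → B` is a morphism of right `H`-comodule algebras from `H` (with its canonical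
right `H`-comodule algebra structure `ρ = Δ`, `Φ_ρ = Φ`) to `B`. -/
def IsComodAlgMorphismFromH {k H B : Type*} [Field k] [Ring H] [Algebra k H]
    [Ring B] [Algebra k B] {Q : QuasiBialgebra k H}
    (R : RightComoduleAlgebra Q B) (v : H →ₐ[k] B) : Prop :=
  (∀ h : H, R.coact (v h) = (Algebra.TensorProduct.map v (AlgHom.id k H)) (Q.comul h))
  ∧ R.PhiRho = (Algebra.TensorProduct.map v (AlgHom.id k (H ⊗[k] H))) Q.Phi

/-- Characterization of the canonical projection `E : B → B`,
`E(b) = v(q¹) b₍₀₎ v(β S(q² b₍₁₎))`, where `q_R = q¹ ⊗ q² = X¹ ⊗ S⁻¹(α X³) X²`,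
stated universally over finite representations of `Φ` and of `ρ(b)`. -/
def IsCanonicalProjection {k H B : Type*} [Field k] [Ring H] [Algebra k H]
    [Ring B] [Algebra k B] (Q : QuasiHopfAlgebra k H)
    (R : RightComoduleAlgebra Q.toQuasiBialgebra B) (v : H →ₐ[k] B) (E : B →ₗ[k] B) : Prop :=
  ∀ (b : B) (n : ℕ) (X1 X2 X3 : Fin n → H),
    Q.Phi = ∑ i, X1 i ⊗ₜ[k] (X2 i ⊗ₜ[k] X3 i) →
    ∀ (p : ℕ) (b0 : Fin p → B) (b1 : Fin p → H),
      R.coact b = ∑ j, b0 j ⊗ₜ[k] b1 j →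
      E b = ∑ i, ∑ j,
        v (X1 i) * b0 j * v (Q.beta * Q.S (Q.Sinv (Q.alpha * X3 i) * X2 i * b1 j))

namespace QH12

open Algebra.TensorProduct (includeLeft)

variable {k H B : Type*} [Field k] [Ring H] [Algebra k H] [Ring B] [Algebra k B]

theorem pair_rep {M N : Type*} [AddCommGroup M] [Module k M] [AddCommGroup N] [Module k N]
    (T : M ⊗[k] N) :
    ∃ (n : ℕ) (X1 : Fin n → M) (X2 : Fin n → N), T = ∑ i, X1 i ⊗ₜ[k] X2 i := by
  induction T using TensorProduct.induction_on with
  | zero => exact ⟨0, Fin.elim0, Fin.elim0, by simp⟩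
  | tmul x y => exact ⟨1, fun _ => x, fun _ => y, by simp⟩
  | add s t hs ht =>
    obtain ⟨n, a, b, rfl⟩ := hs
    obtain ⟨m, c, d, rfl⟩ := ht
    exact ⟨n + m, Fin.append a c, Fin.append b d, by simp [Fin.sum_univ_add]⟩

theorem tri_ind {M N P : Type*} [AddCommGroup M] [Module k M] [AddCommGroup N] [Module k N]
    [AddCommGroup P] [Module k P] {p : M ⊗[k] (N ⊗[k] P) → Prop}
    (h0 : p 0) (hadd : ∀ s t, p s → p t → p (s + t))
    (hp : ∀ a b c, p (a ⊗ₜ (b ⊗ₜ c))) (T : M ⊗[k] (N ⊗[k] P)) : p T := by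
  induction T using TensorProduct.induction_on with
  | zero => exact h0
  | add s t hs ht => exact hadd s t hs ht
  | tmul x y =>
    induction y using TensorProduct.induction_on with
    | zero => simpa using h0
    | add s t hs ht => rw [TensorProduct.tmul_add]; exact hadd _ _ hs ht
    | tmul y z => exact hp x y z

theorem tri_rep {M N P : Type*} [AddCommGroup M] [Module k M] [AddCommGroup N] [Module k N]
    [AddCommGroup P] [Module k P] (T : M ⊗[k] (N ⊗[k] P)) :
    ∃ (n : ℕ) (X1 : Fin n → M) (X2 : Fin n → N) (X3 : Fin n → P),
      T = ∑ i, X1 i ⊗ₜ[k] (X2 i ⊗ₜ[k] X3 i) := by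
  induction T using tri_ind with
  | h0 => exact ⟨0, Fin.elim0, Fin.elim0, Fin.elim0, by simp⟩
  | hp x y z => exact ⟨1, fun _ => x, fun _ => y, fun _ => z, by simp⟩
  | hadd s t hs ht =>
    obtain ⟨n, a, b, c, rfl⟩ := hs
    obtain ⟨m, a', b', c', rfl⟩ := ht
    exact ⟨n + m, Fin.append a a', Fin.append b b', Fin.append c c',
      by simp [Fin.sum_univ_add]⟩

variable (Q : QuasiHopfAlgebra k H)

/-- `h ⊗ g ↦ S(h) α g`. -/
noncomputable def sa : H ⊗[k] H →ₗ[k] H :=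
  LinearMap.mul' k H ∘ₗ TensorProduct.map (LinearMap.mulRight k Q.alpha ∘ₗ Q.S) LinearMap.id

/-- `h ⊗ g ↦ h β S(g)`. -/
noncomputable def mB : H ⊗[k] H →ₗ[k] H :=
  LinearMap.mul' k H ∘ₗ TensorProduct.map LinearMap.id (LinearMap.mulLeft k Q.beta ∘ₗ Q.S)

/-- `l ⊗ h ⊗ g ↦ l β S(h) α g`. -/
noncomputable def W : H ⊗[k] (H ⊗[k] H) →ₗ[k] H :=
  LinearMap.mul' k H ∘ₗ TensorProduct.map LinearMap.id (LinearMap.mulLeft k Q.beta ∘ₗ sa Q)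

/-- `b ⊗ h ↦ b v(h)`. -/
noncomputable def mm (v : H →ₐ[k] B) : B ⊗[k] H →ₗ[k] B :=
  LinearMap.mul' k B ∘ₗ TensorProduct.map LinearMap.id v.toLinearMap

/-- `b ⊗ h ⊗ g ↦ b v(β S(h) α g)`. -/
noncomputable def G (v : H →ₐ[k] B) : B ⊗[k] (H ⊗[k] H) →ₗ[k] B :=
  LinearMap.mul' k B ∘ₗ
    TensorProduct.map LinearMap.id (v.toLinearMap ∘ₗ LinearMap.mulLeft k Q.beta ∘ₗ sa Q)

/-- `b ⊗ h ↦ b ⊗ h ⊗ 1`. -/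
noncomputable def i12 (k H C : Type*) [Field k] [Ring H] [Algebra k H] [Ring C] [Algebra k C] :
    C ⊗[k] H →ₐ[k] C ⊗[k] (H ⊗[k] H) :=
  Algebra.TensorProduct.map (AlgHom.id k C) includeLeft

@[simp] theorem sa_tmul (h g : H) : sa Q (h ⊗ₜ g) = Q.S h * Q.alpha * g := by simp [sa]
@[simp] theorem mB_tmul (h g : H) : mB Q (h ⊗ₜ g) = h * Q.beta * Q.S g := by
  simp [mB, mul_assoc]
@[simp] theorem W_tmul (l : H) (u : H ⊗[k] H) : W Q (l ⊗ₜ u) = l * (Q.beta * sa Q u) := by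
  simp [W]
@[simp] theorem mm_tmul (v : H →ₐ[k] B) (b : B) (h : H) : mm v (b ⊗ₜ h) = b * v h := by
  simp [mm]
@[simp] theorem G_tmul (v : H →ₐ[k] B) (b : B) (u : H ⊗[k] H) :
    G Q v (b ⊗ₜ u) = b * v (Q.beta * sa Q u) := by simp [G]
@[simp] theorem i12_tmul (b : B) (h : H) : i12 k H B (b ⊗ₜ h) = b ⊗ₜ (h ⊗ₜ 1) := by
  simp [i12]

theorem sa_comul (h : H) : sa Q (Q.comul h) = Q.counit h • Q.alpha := by
  obtain ⟨n, a, b, e⟩ := pair_rep (Q.comul h)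
  rw [← Q.antipode_left h n a b e, e]; simp

theorem mB_comul (h : H) : mB Q (Q.comul h) = Q.counit h • Q.beta := by
  obtain ⟨n, a, b, e⟩ := pair_rep (Q.comul h)
  rw [← Q.antipode_right h n a b e, e]; simp

theorem W_Phi : W Q Q.Phi = 1 := by
  obtain ⟨n, a, b, c, e⟩ := tri_rep Q.Phi
  rw [← Q.antipode_Phi n a b c e, e]; simp [mul_assoc]

/-- `S(h u₁) α u₂ g = S(u₁) (S(h) α) ..` bookkeeping. -/
theorem sa_comul_mul (h : H) (u : H ⊗[k] H) :
    sa Q (Q.comul h * u) = Q.counit h • sa Q u := by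
  have key : ∀ t : H ⊗[k] H, ∀ x y : H, sa Q (t * (x ⊗ₜ y)) = Q.S x * sa Q t * y := by
    intro t x y
    induction t using TensorProduct.induction_on with
    | zero => simp
    | add s t hs ht => simp [add_mul, mul_add, hs, ht]
    | tmul a b => simp [Q.S_mul, mul_assoc]
  induction u using TensorProduct.induction_on with
  | zero => simp
  | add s t hs ht => simp [mul_add, hs, ht]
  | tmul x y => rw [key, sa_comul]; simp

variable (R : RightComoduleAlgebra Q.toQuasiBialgebra B) (v : H →ₐ[k] B) (E : B →ₗ[k] B)

theorem E_eq (hv : IsComodAlgMorphismFromH R v) (hE : IsCanonicalProjection Q R v E) (b : B) :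
    E b = G Q v (R.PhiRho * i12 k H B (R.coact b)) := by
  obtain ⟨n, X1, X2, X3, e⟩ := tri_rep Q.Phi
  obtain ⟨m, b0, b1, e'⟩ := pair_rep (R.coact b)
  rw [hE b n X1 X2 X3 e m b0 b1 e', hv.2, e, e']
  simp [Finset.sum_mul, Finset.mul_sum, Q.S_mul, Q.S_Sinv, mul_assoc]
  rw [Finset.sum_comm]

/-- `E(b v(h)) = ε(h) E(b)`. -/
theorem E_mul_v (hv : IsComodAlgMorphismFromH R v) (hE : IsCanonicalProjection Q R v E)
    (b : B) (h : H) : E (b * v h) = Q.counit h • E b := by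
  rw [E_eq Q R v E hv hE, E_eq Q R v E hv hE, map_mul R.coact, map_mul (i12 k H B), ← mul_assoc,
    hv.1]
  generalize R.PhiRho * i12 k H B (R.coact b) = T
  induction T using tri_ind with
  | h0 => simp
  | hadd s t hs ht => simp [add_mul, hs, ht]
  | hp a x y =>
    have key : ∀ t : H ⊗[k] H, G Q v ((a ⊗ₜ (x ⊗ₜ y)) *
        i12 k H B (Algebra.TensorProduct.map v (AlgHom.id k H) t))
        = a * v (mB Q t * (Q.S x * Q.alpha * y)) := by
      intro t
      induction t using TensorProduct.induction_on with
      | zero => simp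
      | add s t hs ht => simp only [add_mul, mul_add, map_add, hs, ht]
      | tmul p q => simp [Q.S_mul, mul_assoc]
    rw [key, mB_comul]
    simp

theorem G_mul_right (T : B ⊗[k] (H ⊗[k] H)) (h : H) :
    G Q v (T * ((1 : B) ⊗ₜ ((1 : H) ⊗ₜ h))) = G Q v T * v h := by
  induction T using tri_ind with
  | h0 => simp
  | hadd s t hs ht => simp [add_mul, hs, ht]
  | hp a x y => simp [mul_assoc]

/-- the map `b ↦ b`-valued `id ⊗ ε`. -/
noncomputable def ie : B ⊗[k] H →ₗ[k] B :=
  TensorProduct.rid k B ∘ₗ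
    (Algebra.TensorProduct.map (AlgHom.id k B) Q.counit).toLinearMap

@[simp] theorem ie_tmul (b : B) (h : H) : ie Q (b ⊗ₜ[k] h) = Q.counit h • b := by simp [ie]

theorem ie_coact (b : B) : ie Q (R.coact b) = b := by
  have := congrArg (TensorProduct.rid k B) (R.counit_coact b)
  rw [TensorProduct.rid_tmul, one_smul] at this
  exact this

theorem G_comul_mul (t : B ⊗[k] H) (T : B ⊗[k] (H ⊗[k] H)) :
    G Q v (Algebra.TensorProduct.map (AlgHom.id k B) Q.comul t * T) = ie Q t * G Q v T := by
  induction t using TensorProduct.induction_on with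
  | zero => simp
  | add s t hs ht => simp [add_mul, hs, ht]
  | tmul b h =>
    induction T using TensorProduct.induction_on with
    | zero => simp
    | add s t hs ht => simp only [mul_add, map_add, hs, ht]
    | tmul c u => simp [sa_comul_mul, mul_assoc]

/-- `E(c₀ b) v(c₁) = c E(b)`. -/
theorem L3 (hv : IsComodAlgMorphismFromH R v) (hE : IsCanonicalProjection Q R v E) (b c : B) :
    mm v (TensorProduct.map (E ∘ₗ LinearMap.mulRight k b) LinearMap.id (R.coact c))
      = c * E b := by
  have key : ∀ t : B ⊗[k] H,
      mm v (TensorProduct.map (E ∘ₗ LinearMap.mulRight k b) LinearMap.id t)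
      = G Q v (R.PhiRho * (Algebra.TensorProduct.assoc k k k B H H)
        ((Algebra.TensorProduct.map R.coact (AlgHom.id k H)) t) * i12 k H B (R.coact b)) := by
    intro t
    induction t using TensorProduct.induction_on with
    | zero => simp
    | add s t hs ht => simp only [mul_add, add_mul, map_add, hs, ht]
    | tmul x h =>
      have h1 : (Algebra.TensorProduct.assoc k k k B H H)
          ((Algebra.TensorProduct.map R.coact (AlgHom.id k H)) (x ⊗ₜ h))
          = i12 k H B (R.coact x) * ((1 : B) ⊗ₜ ((1 : H) ⊗ₜ h)) := by
        simp only [Algebra.TensorProduct.map_tmul, AlgHom.id_apply]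
        generalize R.coact x = s
        induction s using TensorProduct.induction_on with
        | zero => simp
        | add s t hs ht => simp only [add_mul, map_add, TensorProduct.add_tmul, hs, ht]
        | tmul p q => simp
      have h2 : ∀ s : B ⊗[k] H, ((1 : B) ⊗ₜ ((1 : H) ⊗ₜ h)) * i12 k H B s
          = i12 k H B s * ((1 : B) ⊗ₜ[k] ((1 : H) ⊗ₜ[k] h)) := by
        intro s
        induction s using TensorProduct.induction_on with
        | zero => simp
        | add s t hs ht => simp only [add_mul, mul_add, map_add, hs, ht]
        | tmul p q => simp
      rw [h1, mul_assoc, mul_assoc, h2, ← mul_assoc, ← mul_assoc, G_mul_right,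
        mul_assoc R.PhiRho, ← map_mul, ← map_mul, ← E_eq Q R v E hv hE]
      simp
  rw [key, R.coact_coassoc, mul_assoc, G_comul_mul, ie_coact, ← E_eq Q R v E hv hE]

theorem E_one (hv : IsComodAlgMorphismFromH R v) (hE : IsCanonicalProjection Q R v E) :
    E 1 = 1 := by
  rw [E_eq Q R v E hv hE, map_one, map_one, mul_one, hv.2]
  have : ∀ T : H ⊗[k] (H ⊗[k] H),
      G Q v (Algebra.TensorProduct.map v (AlgHom.id k (H ⊗[k] H)) T) = v (W Q T) := by
    intro T
    induction T using TensorProduct.induction_on with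
    | zero => simp
    | add s t hs ht => simp only [map_add, hs, ht]
    | tmul b u => simp
  rw [this, W_Phi, map_one]

/-- `E(b₀) v(b₁) = b`. -/
theorem L4 (hv : IsComodAlgMorphismFromH R v) (hE : IsCanonicalProjection Q R v E) (b : B) :
    mm v (TensorProduct.map E LinearMap.id (R.coact b)) = b := by
  have := L3 Q R v E hv hE 1 b
  rw [E_one Q R v E hv hE, mul_one] at this
  have h1 : E ∘ₗ LinearMap.mulRight k (1 : B) = E := by
    apply LinearMap.ext; intro x; simp
  rwa [h1] at this

/-- `v(h) E(b) = E(v(h₁) b) v(h₂)`. -/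
theorem L3v (hv : IsComodAlgMorphismFromH R v) (hE : IsCanonicalProjection Q R v E) (b : B) (h : H)
    (m : ℕ) (d1 d2 : Fin m → H) (e : Q.comul h = ∑ j, d1 j ⊗ₜ[k] d2 j) :
    v h * E b = ∑ j, E (v (d1 j) * b) * v (d2 j) := by
  rw [← L3 Q R v E hv hE, hv.1, e]; simp

theorem counit_right_rep (h : H) (m : ℕ) (d1 d2 : Fin m → H)
    (e : Q.comul h = ∑ j, d1 j ⊗ₜ[k] d2 j) : ∑ j, Q.counit (d2 j) • d1 j = h := by
  have := congrArg (TensorProduct.rid k H) (Q.counit_comul_right h)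
  rw [e] at this
  simpa using this

/-- `E(b v(h) E(c)) = E(b E(v(h) c))`. -/
theorem L6 (hv : IsComodAlgMorphismFromH R v) (hE : IsCanonicalProjection Q R v E) (b b' : B)
    (h : H) : E (b * (v h * E b')) = E (b * E (v h * b')) := by
  obtain ⟨m, d1, d2, e⟩ := pair_rep (Q.comul h)
  rw [L3v Q R v E hv hE b' h m d1 d2 e]
  conv_rhs => rw [← counit_right_rep Q h m d1 d2 e]
  simp only [Finset.mul_sum, map_sum, ← mul_assoc, E_mul_v Q R v E hv hE, map_smul,
    Finset.sum_mul, smul_mul_assoc, mul_smul_comm]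

theorem counit_left_rep (h : H) (m : ℕ) (d1 d2 : Fin m → H)
    (e : Q.comul h = ∑ j, d1 j ⊗ₜ[k] d2 j) : ∑ j, Q.counit (d1 j) • d2 j = h := by
  have := congrArg (TensorProduct.lid k H) (Q.counit_comul_left h)
  rw [e] at this
  simpa using this

/-- `h ⊗ x ↦ ε(h) x`. -/
noncomputable def eps (X : Type*) [Ring X] [Algebra k X] : H ⊗[k] X →ₐ[k] X :=
  (Algebra.TensorProduct.lid k X).toAlgHom.comp
    (Algebra.TensorProduct.map Q.counit (AlgHom.id k X))

/-- `x ⊗ h ↦ ε(h) x`. -/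
noncomputable def epsr (X : Type*) [Ring X] [Algebra k X] : X ⊗[k] H →ₐ[k] X :=
  (Algebra.TensorProduct.rid k k X).toAlgHom.comp
    (Algebra.TensorProduct.map (AlgHom.id k X) Q.counit)

@[simp] theorem eps_tmul (X : Type*) [Ring X] [Algebra k X] (h : H) (x : X) :
    eps Q X (h ⊗ₜ[k] x) = Q.counit h • x := by simp [eps]

@[simp] theorem epsr_tmul (X : Type*) [Ring X] [Algebra k X] (h : H) (x : X) :
    epsr Q X (x ⊗ₜ[k] h) = Q.counit h • x := by simp [epsr]

theorem eps_comul (h : H) : eps Q H (Q.comul h) = h := by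
  obtain ⟨m, d1, d2, e⟩ := pair_rep (Q.comul h)
  conv_rhs => rw [← counit_left_rep Q h m d1 d2 e]
  rw [e]; simp

theorem epsr_comul (h : H) : epsr Q H (Q.comul h) = h := by
  obtain ⟨m, d1, d2, e⟩ := pair_rep (Q.comul h)
  conv_rhs => rw [← counit_right_rep Q h m d1 d2 e]
  rw [e]; simp

/-- `c ⊗ h ⊗ g ↦ c ⊗ ε(h) g`. -/
noncomputable def e2 (C : Type*) [Ring C] [Algebra k C] : C ⊗[k] (H ⊗[k] H) →ₐ[k] C ⊗[k] H :=
  Algebra.TensorProduct.map (AlgHom.id k C) (eps Q H)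

/-- `c ⊗ h ⊗ g ↦ c ⊗ ε(g) h`. -/
noncomputable def e3 (C : Type*) [Ring C] [Algebra k C] : C ⊗[k] (H ⊗[k] H) →ₐ[k] C ⊗[k] H :=
  Algebra.TensorProduct.map (AlgHom.id k C) (epsr Q H)

/-- `c ⊗ h ⊗ g ↦ c ⊗ h ⊗ g ⊗ 1`. -/
noncomputable def i123 (k H C : Type*) [Field k] [Ring H] [Algebra k H] [Ring C] [Algebra k C] :
    C ⊗[k] (H ⊗[k] H) →ₐ[k] C ⊗[k] (H ⊗[k] (H ⊗[k] H)) :=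
  Algebra.TensorProduct.map (AlgHom.id k C)
    (Algebra.TensorProduct.map (AlgHom.id k H)
      (Algebra.TensorProduct.includeLeft : H →ₐ[k] H ⊗[k] H))

/-- `id ⊗ Δ ⊗ id`. -/
noncomputable def D2 (C : Type*) [Ring C] [Algebra k C] :
    C ⊗[k] (H ⊗[k] H) →ₐ[k] C ⊗[k] (H ⊗[k] (H ⊗[k] H)) :=
  Algebra.TensorProduct.map (AlgHom.id k C)
    (((Algebra.TensorProduct.assoc k k k H H H).toAlgHom).comp
      (Algebra.TensorProduct.map Q.comul (AlgHom.id k H)))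

/-- `id ⊗ id ⊗ Δ`. -/
noncomputable def D3 (C : Type*) [Ring C] [Algebra k C] :
    C ⊗[k] (H ⊗[k] H) →ₐ[k] C ⊗[k] (H ⊗[k] (H ⊗[k] H)) :=
  Algebra.TensorProduct.map (AlgHom.id k C)
    (Algebra.TensorProduct.map (AlgHom.id k H) Q.comul)

@[simp] theorem e2_tmul (c : B) (h g : H) : e2 Q B (c ⊗ₜ (h ⊗ₜ g)) = c ⊗ₜ (Q.counit h • g) := by
  simp [e2]
@[simp] theorem e3_tmul (c : B) (h g : H) : e3 Q B (c ⊗ₜ (h ⊗ₜ g)) = c ⊗ₜ (Q.counit g • h) := by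
  simp [e3]
@[simp] theorem i123_tmul (c : B) (h g : H) :
    i123 k H B (c ⊗ₜ (h ⊗ₜ g)) = c ⊗ₜ (h ⊗ₜ (g ⊗ₜ 1)) := by
  simp [i123]
@[simp] theorem D2_tmul (c : B) (h g : H) : D2 Q B (c ⊗ₜ (h ⊗ₜ g))
    = c ⊗ₜ (Algebra.TensorProduct.assoc k k k H H H (Q.comul h ⊗ₜ g)) := by
  simp [D2]
@[simp] theorem D3_tmul (c : B) (h g : H) :
    D3 Q B (c ⊗ₜ (h ⊗ₜ g)) = c ⊗ₜ (h ⊗ₜ Q.comul g) := by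
  simp [D3]

theorem e2_Phi : e2 Q H Q.Phi = 1 := by
  have := congrArg (Algebra.TensorProduct.map (AlgHom.id k H)
    (Algebra.TensorProduct.lid k H).toAlgHom) Q.counit_Phi
  rw [map_one] at this
  rw [← this]
  generalize Q.Phi = T
  induction T using tri_ind with
  | h0 => simp
  | hadd s t hs ht => simp only [map_add, hs, ht]
  | hp a x y => simp

theorem e2_PhiRho : e2 Q B R.PhiRho = 1 := by
  have := congrArg (Algebra.TensorProduct.map (AlgHom.id k B)
    (Algebra.TensorProduct.lid k H).toAlgHom) R.counit_PhiRho_mid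
  rw [map_one] at this
  rw [← this]
  generalize R.PhiRho = T
  induction T using tri_ind with
  | h0 => simp
  | hadd s t hs ht => simp only [map_add, hs, ht]
  | hp a x y => simp

theorem e3_PhiRho : e3 Q B R.PhiRho = 1 := by
  have := congrArg (Algebra.TensorProduct.map (AlgHom.id k B)
    (Algebra.TensorProduct.rid k k H).toAlgHom) R.counit_PhiRho_right
  rw [map_one] at this
  rw [← this]
  generalize R.PhiRho = T
  induction T using tri_ind with
  | h0 => simp
  | hadd s t hs ht => simp only [map_add, hs, ht]
  | hp a x y => simp

theorem e3_PhiRhoInv : e3 Q B R.PhiRhoInv = 1 := by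
  have := congrArg (e3 Q B) R.inv_mul_PhiRho
  rwa [map_mul, e3_PhiRho, mul_one, map_one] at this

theorem e2_PhiInv : e2 Q H Q.PhiInv = 1 := by
  have := congrArg (e2 Q H) Q.inv_mul_Phi
  rwa [map_mul, e2_Phi, mul_one, map_one] at this

/-- `(ε ⊗ id ⊗ id) Φ = 1`. -/
theorem eps_Phi : eps Q (H ⊗[k] H) Q.Phi = 1 := by
  let p : H ⊗[k] (H ⊗[k] (H ⊗[k] H)) →ₐ[k] H ⊗[k] (H ⊗[k] H) :=
    Algebra.TensorProduct.map (AlgHom.id k H) (eps Q (H ⊗[k] H))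
  have hp : ∀ a u, p (a ⊗ₜ u) = a ⊗ₜ eps Q (H ⊗[k] H) u := by intro a u; simp [p]
  have h2 : ∀ T, p (D2 Q H T) = T := by
    intro T
    induction T using tri_ind with
    | h0 => simp
    | hadd s t hs ht => simp only [map_add, hs, ht]
    | hp a x y =>
      rw [D2_tmul, hp]
      have : ∀ t : H ⊗[k] H, eps Q (H ⊗[k] H)
          (Algebra.TensorProduct.assoc k k k H H H (t ⊗ₜ y)) = eps Q H t ⊗ₜ y := by
        intro t
        induction t using TensorProduct.induction_on with
        | zero => simp
        | add s t hs ht => simp only [map_add, TensorProduct.add_tmul, hs, ht]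
        | tmul b u => simp [TensorProduct.smul_tmul']
      rw [this, eps_comul]
  have h1 : ∀ T, p (i123 k H H T) = i12 k H H (e2 Q H T) := by
    intro T
    induction T using tri_ind with
    | h0 => simp
    | hadd s t hs ht => simp only [map_add, hs, ht]
    | hp a x y => rw [i123_tmul, hp, e2_tmul, eps_tmul, i12_tmul, TensorProduct.smul_tmul']
  have h3 : ∀ T, p (D3 Q H T)
      = Algebra.TensorProduct.map (AlgHom.id k H) Q.comul (e2 Q H T) := by
    intro T
    induction T using tri_ind with
    | h0 => simp
    | hadd s t hs ht => simp only [map_add, hs, ht]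
    | hp a x y => rw [D3_tmul, hp]; simp
  have h4 : ∀ T, p ((Algebra.TensorProduct.assoc k k k H H (H ⊗[k] H))
          ((Algebra.TensorProduct.map Q.comul (AlgHom.id k (H ⊗[k] H))) T)) = T := by
    intro T
    induction T using TensorProduct.induction_on with
    | zero => simp
    | add s t hs ht => simp only [map_add, hs, ht]
    | tmul a u =>
      have : ∀ t : H ⊗[k] H, p (Algebra.TensorProduct.assoc k k k H H (H ⊗[k] H) (t ⊗ₜ u))
          = epsr Q H t ⊗ₜ u := by
        intro t
        induction t using TensorProduct.induction_on with
        | zero => simp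
        | add s t hs ht => simp only [map_add, TensorProduct.add_tmul, hs, ht]
        | tmul b c =>
          rw [Algebra.TensorProduct.assoc_tmul, hp]
          simp [TensorProduct.smul_tmul']
      simp only [Algebra.TensorProduct.map_tmul, AlgHom.id_apply]
      rw [this, epsr_comul]
  have pent : ((1 : H) ⊗ₜ[k] Q.Phi) * D2 Q H Q.Phi * i123 k H H Q.Phi
      = D3 Q H Q.Phi * (Algebra.TensorProduct.assoc k k k H H (H ⊗[k] H))
          ((Algebra.TensorProduct.map Q.comul (AlgHom.id k (H ⊗[k] H))) Q.Phi) := Q.pentagon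
  have := congrArg p pent
  rw [map_mul, map_mul, map_mul, h1, h2, h3, h4, e2_Phi, map_one, map_one, mul_one, one_mul,
    hp] at this
  have h5 := congrArg (fun z => eps Q (H ⊗[k] H) (z * Q.PhiInv)) this
  simpa [mul_assoc, Q.Phi_mul_inv] using h5

theorem mapE_mul (hv : IsComodAlgMorphismFromH R v) (hE : IsCanonicalProjection Q R v E)
    (X : Type*) [Ring X] [Algebra k X] (T : B ⊗[k] X) (U : H ⊗[k] X) :
    TensorProduct.map E LinearMap.id
      (T * Algebra.TensorProduct.map v (AlgHom.id k X) U)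
    = TensorProduct.map E LinearMap.id (T * (1 ⊗ₜ eps Q X U)) := by
  induction T using TensorProduct.induction_on with
  | zero => simp
  | add s t hs ht => simp only [add_mul, map_add, hs, ht]
  | tmul b w =>
    induction U using TensorProduct.induction_on with
    | zero => simp
    | add s t hs ht => simp only [mul_add, map_add, TensorProduct.tmul_add, hs, ht]
    | tmul h u => simp [E_mul_v Q R v E hv hE, TensorProduct.smul_tmul']

theorem R1J (hv : IsComodAlgMorphismFromH R v) (hE : IsCanonicalProjection Q R v E)
    (T : B ⊗[k] (H ⊗[k] H)) :
    TensorProduct.map E LinearMap.id (T * R.PhiRho) = TensorProduct.map E LinearMap.id T := by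
  rw [hv.2, mapE_mul Q R v E hv hE, eps_Phi, ← Algebra.TensorProduct.one_def, mul_one]

theorem R1N (hv : IsComodAlgMorphismFromH R v) (hE : IsCanonicalProjection Q R v E)
    (T : B ⊗[k] (H ⊗[k] (H ⊗[k] H))) :
    TensorProduct.map E LinearMap.id (T * i123 k H B R.PhiRho)
      = TensorProduct.map E LinearMap.id T := by
  have h1 : ∀ U : H ⊗[k] (H ⊗[k] H),
      i123 k H B (Algebra.TensorProduct.map v (AlgHom.id k (H ⊗[k] H)) U)
      = Algebra.TensorProduct.map v (AlgHom.id k _) (i123 k H H U) := by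
    intro U
    induction U using tri_ind with
    | h0 => simp
    | hadd s t hs ht => simp only [map_add, hs, ht]
    | hp a x y => simp
  have h2 : ∀ U : H ⊗[k] (H ⊗[k] H), eps Q (H ⊗[k] (H ⊗[k] H)) (i123 k H H U)
      = i12 k H H (eps Q (H ⊗[k] H) U) := by
    intro U
    induction U using tri_ind with
    | h0 => simp
    | hadd s t hs ht => simp only [map_add, hs, ht]
    | hp a x y => simp
  rw [hv.2, h1, mapE_mul Q R v E hv hE, h2, eps_Phi, map_one,
    ← Algebra.TensorProduct.one_def, mul_one]

theorem W_left (a l : H) (T : H ⊗[k] (H ⊗[k] H)) :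
    W Q ((a ⊗ₜ Q.comul l) * T) = Q.counit l • (a * W Q T) := by
  induction T using TensorProduct.induction_on with
  | zero => simp
  | add s t hs ht => simp only [mul_add, map_add, smul_add, hs, ht]
  | tmul c u => simp [sa_comul_mul, mul_assoc]

theorem W_right (h g : H) (T : H ⊗[k] (H ⊗[k] H)) :
    W Q (T * Algebra.TensorProduct.assoc k k k H H H (Q.comul h ⊗ₜ g))
      = Q.counit h • (W Q T * g) := by
  induction T using tri_ind with
  | h0 => simp
  | hadd s t hs ht => simp only [add_mul, map_add, smul_add, hs, ht]
  | hp a x y =>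
    have key : ∀ t : H ⊗[k] H, W Q ((a ⊗ₜ (x ⊗ₜ y)) *
        Algebra.TensorProduct.assoc k k k H H H (t ⊗ₜ g))
        = a * mB Q t * (Q.S x * Q.alpha * y) * g := by
      intro t
      induction t using TensorProduct.induction_on with
      | zero => simp
      | add s t hs ht => simp only [add_mul, mul_add, map_add, TensorProduct.add_tmul, hs, ht]
      | tmul p q => simp [Q.S_mul, mul_assoc]
    rw [key, mB_comul]
    simp [mul_assoc]

section Gen
variable {X : Type*} [Ring X] [Algebra k X]
variable {C M : Type*} [Ring C] [Algebra k C] [AddCommGroup M] [Module k M]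
theorem g_add_left (L : B ⊗[k] X →ₗ[k] M) (D : C →ₐ[k] B ⊗[k] X) (s t : C) (c : B ⊗[k] X) :
    L (D (s + t) * c) = L (D s * c) + L (D t * c) := by
  rw [map_add, add_mul, map_add]
theorem g_zero_left (L : B ⊗[k] X →ₗ[k] M) (D : C →ₐ[k] B ⊗[k] X) (c : B ⊗[k] X) :
    L (D 0 * c) = 0 := by
  rw [map_zero, zero_mul, map_zero]
theorem g_add_right (L : B ⊗[k] X →ₗ[k] M) (D : C →ₐ[k] B ⊗[k] X) (s t : C) (a c : B ⊗[k] X) :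
    L (a * (c * D (s + t))) = L (a * (c * D s)) + L (a * (c * D t)) := by
  rw [map_add, mul_add, mul_add, map_add]
theorem g_zero_right (L : B ⊗[k] X →ₗ[k] M) (D : C →ₐ[k] B ⊗[k] X) (a c : B ⊗[k] X) :
    L (a * (c * D 0)) = 0 := by
  rw [map_zero, mul_zero, mul_zero, map_zero]
theorem g_cancel (D : C →ₐ[k] B ⊗[k] X) (u w : C)
    (h : u * w = 1) (t : B ⊗[k] X) : t = D u * (D w * t) := by
  rw [← mul_assoc, ← map_mul, h, map_one, one_mul]
end Gen

set_option synthInstance.maxHeartbeats 400000 in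
set_option maxHeartbeats 1600000 in
theorem R2 (V U : B ⊗[k] (H ⊗[k] H)) :
    TensorProduct.map E (W Q) (D3 Q B V * (((1 : B) ⊗ₜ Q.Phi) * D2 Q B U))
      = TensorProduct.map E LinearMap.id (e3 Q B V * e2 Q B U) := by
  induction V using tri_ind with
  | h0 =>
    rw [map_zero (e3 Q B), zero_mul, map_zero]
    exact g_zero_left (k := k) (X := H ⊗[k] (H ⊗[k] H)) (TensorProduct.map E (W Q)) (D3 Q B) _
  | hadd s t hs ht =>
    rw [map_add (e3 Q B), add_mul (e3 Q B s),
      map_add (TensorProduct.map E LinearMap.id), ← hs, ← ht]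
    exact g_add_left (k := k) (X := H ⊗[k] (H ⊗[k] H)) (TensorProduct.map E (W Q)) (D3 Q B) s t _
  | hp c a l =>
    induction U using tri_ind with
    | h0 =>
      rw [map_zero (e2 Q B), mul_zero, map_zero]
      exact g_zero_right (k := k) (X := H ⊗[k] (H ⊗[k] H)) (TensorProduct.map E (W Q)) (D2 Q B) _ _
    | hadd s t hs ht =>
      rw [map_add (e2 Q B), mul_add (e3 Q B _),
        map_add (TensorProduct.map E LinearMap.id), ← hs, ← ht]
      exact g_add_right (k := k) (X := H ⊗[k] (H ⊗[k] H)) (TensorProduct.map E (W Q)) (D2 Q B) s t _ _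
    | hp b h g =>
      simp [W_left, W_right, W_Phi, smul_comm (Q.counit l)]

/-- `P(b v(h)) = P(b)(1 ⊗ h)`. -/
theorem Pv (hv : IsComodAlgMorphismFromH R v) (hE : IsCanonicalProjection Q R v E)
    (b : B) (h : H) : TensorProduct.map E LinearMap.id (R.coact (b * v h))
      = TensorProduct.map E LinearMap.id (R.coact b * (1 ⊗ₜ h)) := by
  rw [map_mul, hv.1, mapE_mul Q R v E hv hE, eps_comul]

theorem PG (hv : IsComodAlgMorphismFromH R v) (hE : IsCanonicalProjection Q R v E)
    (T : B ⊗[k] (H ⊗[k] H)) :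
    TensorProduct.map E LinearMap.id (R.coact (G Q v T))
      = TensorProduct.map E (W Q) ((Algebra.TensorProduct.assoc k k k B H (H ⊗[k] H))
          ((Algebra.TensorProduct.map R.coact (AlgHom.id k (H ⊗[k] H))) T)) := by
  induction T using TensorProduct.induction_on with
  | zero => simp
  | add s t hs ht => simp only [map_add, hs, ht]
  | tmul b u =>
    rw [G_tmul, Pv Q R v E hv hE]
    simp only [Algebra.TensorProduct.map_tmul, AlgHom.id_apply]
    generalize R.coact b = t
    induction t using TensorProduct.induction_on with
    | zero => simp
    | add s t hs ht => simp only [add_mul, map_add, TensorProduct.add_tmul, hs, ht]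
    | tmul x y => simp

set_option synthInstance.maxHeartbeats 400000 in
set_option maxHeartbeats 1600000 in
/-- `E(a₀) ⊗ a₁ = a ⊗ 1` for `a = E(b)`. -/
theorem PE (hv : IsComodAlgMorphismFromH R v) (hE : IsCanonicalProjection Q R v E) (b : B) :
    TensorProduct.map E LinearMap.id (R.coact (E b)) = E b ⊗ₜ 1 := by
  have h1 : ∀ t : B ⊗[k] H, (Algebra.TensorProduct.assoc k k k B H (H ⊗[k] H))
          ((Algebra.TensorProduct.map R.coact (AlgHom.id k (H ⊗[k] H))) (i12 k H B t))
      = i123 k H B ((Algebra.TensorProduct.assoc k k k B H H)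
        ((Algebra.TensorProduct.map R.coact (AlgHom.id k H)) t)) := by
    intro t
    induction t using TensorProduct.induction_on with
    | zero => simp
    | add s t hs ht => simp only [map_add, hs, ht]
    | tmul x h =>
      simp only [i12_tmul, Algebra.TensorProduct.map_tmul, AlgHom.id_apply]
      generalize R.coact x = t
      induction t using TensorProduct.induction_on with
      | zero => simp
      | add s t hs ht => simp only [map_add, TensorProduct.add_tmul, hs, ht]
      | tmul x y => simp
  have h2 : ∀ t : B ⊗[k] H,
      i123 k H B (Algebra.TensorProduct.map (AlgHom.id k B) Q.comul t)
        = D2 Q B (i12 k H B t) := by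
    intro t
    induction t using TensorProduct.induction_on with
    | zero => simp
    | add s t hs ht => simp only [map_add, hs, ht]
    | tmul x h =>
      simp only [i12_tmul, D2_tmul, Algebra.TensorProduct.map_tmul, AlgHom.id_apply]
      generalize Q.comul h = t
      induction t using TensorProduct.induction_on with
      | zero => simp
      | add s t hs ht =>
        simp only [map_add, TensorProduct.add_tmul, TensorProduct.tmul_add, hs, ht]
      | tmul x y => simp
  have h3 : ∀ t : B ⊗[k] H, e2 Q B (i12 k H B t) = ie Q t ⊗ₜ 1 := by
    intro t
    induction t using TensorProduct.induction_on with
    | zero => simp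
    | add s t hs ht => simp only [map_add, TensorProduct.add_tmul, hs, ht]
    | tmul x h => simp [TensorProduct.smul_tmul']
  have pent : ((1 : B) ⊗ₜ[k] Q.Phi) * D2 Q B R.PhiRho * i123 k H B R.PhiRho
      = D3 Q B R.PhiRho * (Algebra.TensorProduct.assoc k k k B H (H ⊗[k] H))
          ((Algebra.TensorProduct.map R.coact (AlgHom.id k (H ⊗[k] H))) R.PhiRho) := R.pentagon
  have pent' : (Algebra.TensorProduct.assoc k k k B H (H ⊗[k] H))
          ((Algebra.TensorProduct.map R.coact (AlgHom.id k (H ⊗[k] H))) R.PhiRho)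
      = D3 Q B R.PhiRhoInv *
        (((1 : B) ⊗ₜ[k] Q.Phi) * D2 Q B R.PhiRho * i123 k H B R.PhiRho) := by
    rw [pent]
    exact g_cancel (X := H ⊗[k] (H ⊗[k] H)) (D3 Q B) _ _ R.inv_mul_PhiRho _
  have hW : ∀ T : B ⊗[k] (H ⊗[k] (H ⊗[k] H)), TensorProduct.map E (W Q) T
      = TensorProduct.map LinearMap.id (W Q) (TensorProduct.map E LinearMap.id T) := by
    intro T
    rw [← LinearMap.comp_apply, ← TensorProduct.map_comp, LinearMap.id_comp, LinearMap.comp_id]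
  conv_lhs => rw [E_eq Q R v E hv hE b]
  rw [PG Q R v E hv hE, map_mul, map_mul, h1, pent', mul_assoc, mul_assoc,
    ← map_mul (i123 k H B), R.coact_coassoc, map_mul (i123 k H B), h2, hW, ← mul_assoc, ← mul_assoc, ← mul_assoc,
    R1N Q R v E hv hE, ← hW, mul_assoc, mul_assoc, ← map_mul (D2 Q B), R2, e3_PhiRhoInv, one_mul,
    map_mul, e2_PhiRho, one_mul, h3, ie_coact]
  simp

theorem EE (hv : IsComodAlgMorphismFromH R v) (hE : IsCanonicalProjection Q R v E) (b : B) :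
    E (E b) = E b := by
  have h1 := congrArg (ie Q) (PE Q R v E hv hE b)
  have h2 : ∀ t : B ⊗[k] H, ie Q (TensorProduct.map E LinearMap.id t) = E (ie Q t) := by
    intro t
    induction t using TensorProduct.induction_on with
    | zero => simp
    | add s t hs ht => simp only [map_add, hs, ht]
    | tmul x h => simp
  rw [h2, ie_coact] at h1
  simpa using h1

theorem EvE (hv : IsComodAlgMorphismFromH R v) (hE : IsCanonicalProjection Q R v E) (b : B)
    (h : H) : E (v h * E b) = E (v h * b) := by
  have := L6 Q R v E hv hE 1 b h
  rwa [one_mul, one_mul, EE Q R v E hv hE] at this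

theorem PhiRhoInv_eq (hv : IsComodAlgMorphismFromH R v) :
    R.PhiRhoInv = Algebra.TensorProduct.map v (AlgHom.id k (H ⊗[k] H)) Q.PhiInv := by
  refine left_inv_eq_right_inv R.inv_mul_PhiRho ?_
  rw [hv.2, ← map_mul, Q.Phi_mul_inv, map_one]

/-- `ρ(a) = E(v(x¹)a) v(x²) ⊗ x³`. -/
theorem coactE (hv : IsComodAlgMorphismFromH R v) (hE : IsCanonicalProjection Q R v E) (b : B)
    (n : ℕ) (x1 x2 x3 : Fin n → H) (e : Q.PhiInv = ∑ i, x1 i ⊗ₜ[k] (x2 i ⊗ₜ[k] x3 i)) :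
    R.coact (E b) = ∑ i, (E (v (x1 i) * E b) * v (x2 i)) ⊗ₜ[k] x3 i := by
  let J0 : B ⊗[k] (H ⊗[k] H) →ₗ[k] B ⊗[k] H :=
    TensorProduct.map (mm v) LinearMap.id ∘ₗ
      (TensorProduct.assoc k B H H).symm.toLinearMap
  have hJ0 : ∀ a x y, J0 (a ⊗ₜ (x ⊗ₜ y)) = (a * v x) ⊗ₜ y := by intro a x y; simp [J0]
  have h1 : ∀ t : B ⊗[k] H, J0 (TensorProduct.map E LinearMap.id
      ((Algebra.TensorProduct.assoc k k k B H H)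
        ((Algebra.TensorProduct.map R.coact (AlgHom.id k H)) t))) = t := by
    intro t
    induction t using TensorProduct.induction_on with
    | zero => simp
    | add s t hs ht => simp only [map_add, hs, ht]
    | tmul x h =>
      conv_rhs => rw [← L4 Q R v E hv hE x]
      simp only [Algebra.TensorProduct.map_tmul, AlgHom.id_apply]
      generalize R.coact x = t
      induction t using TensorProduct.induction_on with
      | zero => simp
      | add s t hs ht => simp only [map_add, TensorProduct.add_tmul, hs, ht]
      | tmul x y => simp [hJ0]
  have h2 : ∀ (x : H) (u : H ⊗[k] H) (t : B ⊗[k] H), TensorProduct.map E LinearMap.id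
      ((v x ⊗ₜ u) * Algebra.TensorProduct.map (AlgHom.id k B) Q.comul t)
      = TensorProduct.map LinearMap.id (LinearMap.mulLeft k u ∘ₗ Q.comul.toLinearMap)
        (TensorProduct.map (E ∘ₗ LinearMap.mulLeft k (v x)) LinearMap.id t) := by
    intro x u t
    induction t using TensorProduct.induction_on with
    | zero => simp
    | add s t hs ht => simp only [map_add, mul_add, hs, ht]
    | tmul x h => simp
  have h3 : ∀ x : H, TensorProduct.map (E ∘ₗ LinearMap.mulLeft k (v x)) LinearMap.id
      (R.coact (E b)) = E (v x * E b) ⊗ₜ 1 := by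
    intro x
    have : E ∘ₗ LinearMap.mulLeft k (v x) = (E ∘ₗ LinearMap.mulLeft k (v x)) ∘ₗ E := by
      apply LinearMap.ext; intro y
      simp [EvE Q R v E hv hE]
    have h4 : TensorProduct.map (E ∘ₗ LinearMap.mulLeft k (v x)) (LinearMap.id (M := H))
      = TensorProduct.map (E ∘ₗ LinearMap.mulLeft k (v x)) LinearMap.id ∘ₗ
        TensorProduct.map E LinearMap.id := by
      rw [← TensorProduct.map_comp, ← this, LinearMap.id_comp]
    rw [h4, LinearMap.comp_apply, PE Q R v E hv hE]
    simp
  have h5 : (Algebra.TensorProduct.assoc k k k B H H)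
        ((Algebra.TensorProduct.map R.coact (AlgHom.id k H)) (R.coact (E b)))
      = R.PhiRhoInv * Algebra.TensorProduct.map (AlgHom.id k B) Q.comul (R.coact (E b))
        * R.PhiRho := by
    rw [mul_assoc, ← R.coact_coassoc, ← mul_assoc, R.inv_mul_PhiRho, one_mul]
  conv_lhs => rw [← h1 (R.coact (E b)), h5, R1J Q R v E hv hE, PhiRhoInv_eq Q R v hv, e]
  simp only [map_sum, Finset.sum_mul, Algebra.TensorProduct.map_tmul, AlgHom.id_apply, h2, h3]
  simp [hJ0]

/-- `E(b c₀) ⊗ g c₁ = E(b c) ⊗ g` for `c = E(d)`. -/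
theorem L7 (hv : IsComodAlgMorphismFromH R v) (hE : IsCanonicalProjection Q R v E) (b b' : B)
    (g : H) : TensorProduct.map E LinearMap.id ((b ⊗ₜ g) * R.coact (E b'))
      = E (b * E b') ⊗ₜ g := by
  obtain ⟨n, x1, x2, x3, e⟩ := tri_rep Q.PhiInv
  have h1 := e2_PhiInv Q
  let F : H ⊗[k] H →ₗ[k] B ⊗[k] H := TensorProduct.map
    (E ∘ₗ LinearMap.mulLeft k b ∘ₗ E ∘ₗ LinearMap.mulRight k (E b') ∘ₗ v.toLinearMap)
    (LinearMap.mulLeft k g)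
  have h2 := congrArg F h1
  rw [coactE Q R v E hv hE b' n x1 x2 x3 e]
  rw [e] at h2
  simp only [map_sum, e2_tmul, Algebra.TensorProduct.one_def, F, TensorProduct.map_tmul] at h2
  simp only [Finset.mul_sum, map_sum, Algebra.TensorProduct.tmul_mul_tmul,
    TensorProduct.map_tmul, ← mul_assoc, E_mul_v Q R v E hv hE]
  simpa [TensorProduct.smul_tmul', EE Q R v E hv hE, mul_assoc] using h2

theorem L8 (hv : IsComodAlgMorphismFromH R v) (hE : IsCanonicalProjection Q R v E) (b b' : B)
    (n : ℕ) (x1 x2 x3 : Fin n → H) (e : Q.PhiInv = ∑ i, x1 i ⊗ₜ[k] (x2 i ⊗ₜ[k] x3 i)) :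
    E b * E b' = ∑ i, E (E (v (x1 i) * E b) * E (v (x2 i) * E b')) * v (x3 i) := by
  conv_lhs => rw [← L4 Q R v E hv hE (E b * E b'), map_mul,
    coactE Q R v E hv hE b n x1 x2 x3 e]
  simp only [Finset.sum_mul, map_sum, L7 Q R v E hv hE, mm_tmul]
  refine Finset.sum_congr rfl fun i _ => ?_
  rw [mul_assoc, L6 Q R v E hv hE, EvE Q R v E hv hE b']

end QH12

/-- `Ψ` is multiplicative: `((x¹▷a)*(x²h₁▷a'))·v(x³h₂h') = a v(h) a' v(h')`, where
`*` is the multiplication `a * a' = E(aa')` of the coinvariants and `▷` the action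
`h ▷ b = E(v(h)b)`. -/
theorem statement12 {k H B : Type*} [Field k] [Ring H] [Algebra k H]
    [Ring B] [Algebra k B] (Q : QuasiHopfAlgebra k H)
    (R : RightComoduleAlgebra Q.toQuasiBialgebra B)
    (v : H →ₐ[k] B) (hv : IsComodAlgMorphismFromH R v)
    (E : B →ₗ[k] B) (hE : IsCanonicalProjection Q R v E) :
    ∀ a ∈ LinearMap.range E, ∀ a' ∈ LinearMap.range E, ∀ (h h' : H)
      (n : ℕ) (x1 x2 x3 : Fin n → H),
      Q.PhiInv = ∑ i, x1 i ⊗ₜ[k] (x2 i ⊗ₜ[k] x3 i) →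
      ∀ (m : ℕ) (d1 d2 : Fin m → H), Q.comul h = ∑ j, d1 j ⊗ₜ[k] d2 j →
      (∑ i, ∑ j, E (E (v (x1 i) * a) * E (v (x2 i * d1 j) * a'))
          * v (x3 i * d2 j * h'))
        = a * v h * (a' * v h') := by
  rintro _ ⟨b, rfl⟩ _ ⟨b', rfl⟩ h h' n x1 x2 x3 e m d1 d2 e'
  have h1 : E b * v h * (E b' * v h') = E b * (v h * E b') * v h' := by simp only [mul_assoc]
  rw [h1, QH12.L3v Q R v E hv hE b' h m d1 d2 e', Finset.mul_sum, Finset.sum_mul,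
    Finset.sum_comm]
  refine Finset.sum_congr rfl fun j _ => ?_
  rw [← mul_assoc, QH12.L8 Q R v E hv hE b (v (d1 j) * b') n x1 x2 x3 e, Finset.sum_mul,
    Finset.sum_mul]
  refine Finset.sum_congr rfl fun i _ => ?_
  rw [QH12.EvE Q R v E hv hE (v (d1 j) * b')]
  rw [map_mul v _ h', map_mul v (x3 i), map_mul v (x2 i)]
  have h2 : E (E (v (x1 i) * E b) * E (v (x2 i) * v (d1 j) * E b'))
      = E (E (v (x1 i) * E b) * E (v (x2 i) * (v (d1 j) * b'))) := by
    rw [← map_mul v, QH12.EvE Q R v E hv hE b', map_mul v, mul_assoc]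
  rw [h2]
  simp only [mul_assoc]
end

section
/- Let H be a quasi-Hopf algebra, B a right H-comodule algebra, and v : H → B a morphism of right H-comodule algebras. Define E : B → B by E(b) = v(q¹)b₍₀₎v(βS(q²b₍₁₎)), set A = E(B) and h▷b = E(v(h)b). Then for all a ∈ A and h ∈ H: v(h)a = (h₁▷a)v(h₂) in B. -/
open TensorProduct BigOperators

namespace St13

variable {k H B : Type*} [Field k] [Ring H] [Algebra k H] [Ring B] [Algebra k B]

theorem exists_rep2 {M N : Type*} [AddCommGroup M] [Module k M] [AddCommGroup N] [Module k N]
    (t : M ⊗[k] N) : ∃ (n : ℕ) (a : Fin n → M) (b : Fin n → N), t = ∑ i, a i ⊗ₜ[k] b i := by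
  induction t with
  | zero => exact ⟨0, Fin.elim0, Fin.elim0, by simp⟩
  | tmul x y => exact ⟨1, fun _ => x, fun _ => y, by simp⟩
  | add s t hs ht =>
    obtain ⟨n, a, b, rfl⟩ := hs
    obtain ⟨m, c, d, rfl⟩ := ht
    exact ⟨n + m, Fin.append a c, Fin.append b d, by simp [Fin.sum_univ_add]⟩

theorem exists_rep3 (t : H ⊗[k] (H ⊗[k] H)) :
    ∃ (n : ℕ) (a b c : Fin n → H), t = ∑ i, a i ⊗ₜ[k] (b i ⊗ₜ[k] c i) := by
  induction t with
  | zero => exact ⟨0, Fin.elim0, Fin.elim0, Fin.elim0, by simp⟩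
  | tmul x y =>
    obtain ⟨n, a, b, rfl⟩ := exists_rep2 y
    exact ⟨n, fun _ => x, a, b, by simp [TensorProduct.tmul_sum]⟩
  | add s t hs ht =>
    obtain ⟨n, a, b, e, rfl⟩ := hs
    obtain ⟨m, c, d, f, rfl⟩ := ht
    exact ⟨n + m, Fin.append a c, Fin.append b d, Fin.append e f, by simp [Fin.sum_univ_add]⟩

variable (Q : QuasiHopfAlgebra k H) (v : H →ₐ[k] B)

/-- inner map `b ⊗ c ↦ v x * b * v (β S(y c) α z)` -/
noncomputable def T0 (x y z : H) : B ⊗[k] H →ₗ[k] B :=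
  TensorProduct.lift ((LinearMap.mul k B).compl₁₂ (LinearMap.mulLeft k (v x))
    (v.toLinearMap ∘ₗ LinearMap.mulLeft k Q.beta ∘ₗ LinearMap.mulRight k (Q.alpha * z)
      ∘ₗ Q.S ∘ₗ LinearMap.mulLeft k y))

theorem T0_tmul (x y z : H) (b : B) (c : H) :
    T0 Q v x y z (b ⊗ₜ c) = v x * b * v (Q.beta * (Q.S (y * c) * (Q.alpha * z))) := by
  simp [T0, mul_assoc]

noncomputable def T1 (x : H) : H ⊗[k] H →ₗ[k] (B ⊗[k] H →ₗ[k] B) :=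
  TensorProduct.lift (LinearMap.mk₂ k (T0 Q v x)
    (by intros; ext; simp [T0_tmul, add_mul, mul_add])
    (by intros; ext; simp [T0_tmul])
    (by intros; ext; simp [T0_tmul, mul_add])
    (by intros; ext; simp [T0_tmul]))

theorem T1_tmul (x y z : H) (b : B) (c : H) :
    T1 Q v x (y ⊗ₜ z) (b ⊗ₜ c) = v x * b * v (Q.beta * (Q.S (y * c) * (Q.alpha * z))) := by
  simp [T1, T0_tmul]

noncomputable def T : H ⊗[k] (H ⊗[k] H) →ₗ[k] (B ⊗[k] H →ₗ[k] B) :=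
  TensorProduct.lift (LinearMap.mk₂ k (fun x => T1 Q v x)
    (by intros; rw [← LinearMap.add_apply]; congr 1; ext; simp [T1_tmul, add_mul])
    (by intros; rw [← LinearMap.smul_apply]; congr 1; ext; simp [T1_tmul])
    (by intros; simp)
    (by intros; simp))

theorem T_tmul (x y z : H) (b : B) (c : H) :
    T Q v (x ⊗ₜ (y ⊗ₜ z)) (b ⊗ₜ c) = v x * b * v (Q.beta * (Q.S (y * c) * (Q.alpha * z))) := by
  simp [T, T1_tmul]

theorem E_eq (R : RightComoduleAlgebra Q.toQuasiBialgebra B) (E : B →ₗ[k] B)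
    (hE : IsCanonicalProjection Q R v E) (b : B) : E b = T Q v Q.Phi (R.coact b) := by
  obtain ⟨n, X1, X2, X3, hX⟩ := exists_rep3 Q.Phi
  obtain ⟨p, b0, b1, hb⟩ := exists_rep2 (R.coact b)
  rw [hE b n X1 X2 X3 hX p b0 b1 hb, hX, hb]
  simp only [map_sum, LinearMap.sum_apply, T_tmul]
  rw [Finset.sum_comm]
  refine Finset.sum_congr rfl fun j _ => Finset.sum_congr rfl fun i _ => ?_
  simp only [Q.S_mul, Q.S_Sinv, mul_assoc]

theorem counit_S (h : H) : Q.counit (Q.S h) = Q.counit h := by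
  obtain ⟨n, a, b, hd⟩ := exists_rep2 (Q.comul h)
  have h1 := congrArg Q.counit (Q.antipode_left h n a b hd)
  have h2 := Q.counit_comul_right h
  rw [hd] at h2
  have h3 := congrArg (fun t => Q.counit (Q.S (TensorProduct.rid k H t))) h2
  simp [Q.counit_alpha] at h1 h3
  rw [← h1, ← h3]
  exact Finset.sum_congr rfl fun i _ => mul_comm _ _

/-- `E(b v(h)) = ε(h) E(b)` at the level of tensors. -/
theorem T_right (M : H ⊗[k] (H ⊗[k] H)) (w : B ⊗[k] H) (h : H) :
    T Q v M (w * Algebra.TensorProduct.map v (AlgHom.id k H) (Q.comul h))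
      = Q.counit h • T Q v M w := by
  obtain ⟨n, X1, X2, X3, rfl⟩ := exists_rep3 M
  obtain ⟨p, b0, b1, rfl⟩ := exists_rep2 w
  obtain ⟨m, a, b, hd⟩ := exists_rep2 (Q.comul h)
  have h1 := Q.antipode_right h m a b hd
  have key : ∀ u : H, ∑ i, a i * (Q.beta * (Q.S (b i) * u)) = Q.counit h • (Q.beta * u) := by
    intro u
    rw [← smul_mul_assoc, ← h1, Finset.sum_mul]
    simp only [mul_assoc]
  rw [hd]
  simp only [map_sum, LinearMap.sum_apply, Finset.sum_mul, Finset.mul_sum, Finset.smul_sum,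
    Algebra.TensorProduct.map_tmul, Algebra.TensorProduct.tmul_mul_tmul, T_tmul, AlgHom.id_apply]
  rw [Finset.sum_comm]
  refine Finset.sum_congr rfl fun j _ => ?_
  rw [Finset.sum_comm]
  refine Finset.sum_congr rfl fun i _ => ?_
  have := congrArg (fun t => v (X1 i) * b0 j * v t)
    (key (Q.S (X2 i * b1 j) * (Q.alpha * X3 i)))
  simp only [map_sum, map_smul, Finset.mul_sum, mul_smul_comm] at this
  rw [← this]
  refine Finset.sum_congr rfl fun l _ => ?_
  simp only [Q.S_mul, mul_assoc, map_mul]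

/-- right multiplication by `v z` -/
theorem T_left (M : H ⊗[k] (H ⊗[k] H)) (w : B ⊗[k] H) (t : H ⊗[k] H) (z : H) :
    T Q v M (Algebra.TensorProduct.map v (AlgHom.id k H) t * w) * v z
      = T Q v (M * Algebra.TensorProduct.assoc k k k H H H (t ⊗ₜ z)) w := by
  obtain ⟨n, X1, X2, X3, rfl⟩ := exists_rep3 M
  obtain ⟨p, b0, b1, rfl⟩ := exists_rep2 w
  obtain ⟨m, a, b, rfl⟩ := exists_rep2 t
  simp only [map_sum, LinearMap.sum_apply, Finset.sum_mul, Finset.mul_sum,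
    TensorProduct.sum_tmul, Algebra.TensorProduct.assoc_tmul,
    Algebra.TensorProduct.map_tmul, Algebra.TensorProduct.tmul_mul_tmul, T_tmul, AlgHom.id_apply]
  refine Finset.sum_congr rfl fun j _ => ?_
  rw [Finset.sum_comm]
  conv_rhs => rw [Finset.sum_comm]
  first
  | refine Finset.sum_congr rfl fun i _ => Finset.sum_congr rfl fun l _ => ?_
    simp only [mul_assoc, map_mul]
  | rw [Finset.sum_comm]
    refine Finset.sum_congr rfl fun i _ => Finset.sum_congr rfl fun l _ => ?_
    simp only [mul_assoc, map_mul]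

theorem T_delta (M : H ⊗[k] (H ⊗[k] H)) (w : B ⊗[k] H) (x y : H) :
    T Q v ((x ⊗ₜ Q.comul y) * M) w = Q.counit y • (v x * T Q v M w) := by
  obtain ⟨n, X1, X2, X3, rfl⟩ := exists_rep3 M
  obtain ⟨p, b0, b1, rfl⟩ := exists_rep2 w
  obtain ⟨m, a, b, hd⟩ := exists_rep2 (Q.comul y)
  have h1 := Q.antipode_left y m a b hd
  have key : ∀ u w : H, ∑ i, u * (Q.S (a i) * (Q.alpha * (b i * w)))
      = Q.counit y • (u * (Q.alpha * w)) := by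
    intro u w
    rw [← mul_smul_comm, ← smul_mul_assoc, ← h1, Finset.sum_mul, Finset.mul_sum]
    simp only [mul_assoc]
  rw [hd]
  simp only [map_sum, LinearMap.sum_apply, Finset.sum_mul, Finset.mul_sum, Finset.smul_sum,
    TensorProduct.tmul_sum, Algebra.TensorProduct.tmul_mul_tmul, T_tmul]
  refine Finset.sum_congr rfl fun j _ => ?_
  refine Finset.sum_congr rfl fun i _ => ?_
  have := congrArg (fun t => v x * (v (X1 i) * b0 j * v t))
    (key (Q.beta * Q.S (X2 i * b1 j)) (X3 i))
  simp only [map_sum, map_smul, Finset.mul_sum, mul_smul_comm] at this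
  simp only [mul_assoc] at this ⊢
  rw [← this]
  refine Finset.sum_congr rfl fun l _ => ?_
  simp only [Q.S_mul, mul_assoc, map_mul]

theorem E_mul_v (R : RightComoduleAlgebra Q.toQuasiBialgebra B)
    (hv : IsComodAlgMorphismFromH R v) (E : B →ₗ[k] B)
    (hE : IsCanonicalProjection Q R v E) (b : B) (h : H) :
    E (b * v h) = Q.counit h • E b := by
  rw [E_eq Q v R E hE, E_eq Q v R E hE, map_mul, hv.1, T_right]

theorem E_idem (R : RightComoduleAlgebra Q.toQuasiBialgebra B)
    (hv : IsComodAlgMorphismFromH R v) (E : B →ₗ[k] B)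
    (hE : IsCanonicalProjection Q R v E) (b : B) : E (E b) = E b := by
  obtain ⟨n, X1, X2, X3, hX⟩ := exists_rep3 Q.Phi
  obtain ⟨p, b0, b1, hb⟩ := exists_rep2 (R.coact b)
  have h1 : ∑ j, Q.counit (b1 j) • b0 j = b := by
    have := R.counit_coact b
    rw [hb] at this
    simpa using congrArg (TensorProduct.rid k B) this
  have h2 : ∑ i, (Q.counit (X2 i) * Q.counit (X3 i)) • X1 i = 1 := by
    have := Q.counit_Phi
    rw [hX] at this
    have := congrArg (fun t => TensorProduct.rid k H (Algebra.TensorProduct.map (AlgHom.id k H)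
      (Q.counit.comp (Algebra.TensorProduct.lid k H).toAlgHom) t)) this
    simp only [map_one] at this
    simpa [Algebra.TensorProduct.one_def] using this
  have h3 : b = ∑ j, ∑ i, (Q.counit (b1 j) * (Q.counit (X2 i) * Q.counit (X3 i))) •
      (v (X1 i) * b0 j) := by
    conv_lhs => rw [← one_mul b, ← map_one v, ← h2, ← h1]
    simp only [map_sum, map_smul, Finset.mul_sum, Finset.sum_mul, smul_mul_smul_comm, mul_comm]
    first | done | rw [Finset.sum_comm]
  conv_lhs => rw [E_eq Q v R E hE b, hX, hb]
  conv_rhs => rw [h3]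
  simp only [map_sum, LinearMap.sum_apply, T_tmul, map_smul]
  refine Finset.sum_congr rfl fun j _ => Finset.sum_congr rfl fun i _ => ?_
  rw [E_mul_v Q v R hv E hE]
  congr 1
  simp only [map_mul, counit_S, Q.counit_beta, Q.counit_alpha]
  ring

theorem E_comm (R : RightComoduleAlgebra Q.toQuasiBialgebra B)
    (hv : IsComodAlgMorphismFromH R v) (E : B →ₗ[k] B)
    (hE : IsCanonicalProjection Q R v E) (b : B) (h : H) (m : ℕ) (d1 d2 : Fin m → H)
    (hd : Q.comul h = ∑ j, d1 j ⊗ₜ[k] d2 j) :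
    v h * E b = ∑ j, E (v (d1 j) * b) * v (d2 j) := by
  have hco : Q.Phi * (Algebra.TensorProduct.assoc k k k H H H)
          ((Algebra.TensorProduct.map Q.comul (AlgHom.id k H)) (Q.comul h))
      = (Algebra.TensorProduct.map (AlgHom.id k H) Q.comul) (Q.comul h) * Q.Phi := by
    rw [Q.comul_coassoc, mul_assoc, Q.inv_mul_Phi, mul_one]
  have h1 : ∑ j, Q.counit (d2 j) • d1 j = h := by
    have := Q.counit_comul_right h
    rw [hd] at this
    simpa using congrArg (TensorProduct.rid k H) this
  rw [hd] at hco
  have h2 := congrArg (fun t => T Q v t (R.coact b)) hco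
  simp only [map_sum, Finset.mul_sum, Finset.sum_mul, LinearMap.sum_apply,
    Algebra.TensorProduct.map_tmul, AlgHom.id_apply, T_delta, ← T_left] at h2
  simp only [E_eq Q v R E hE, map_mul, hv.1]
  rw [h2]
  conv_lhs => rw [← h1]
  simp only [map_sum, map_smul, Finset.sum_mul, smul_mul_assoc]

end St13

/-- `v(h) a = (h₁ ▷ a) v(h₂)` for `a` in the coinvariants `A = E(B)`. -/
theorem statement13 {k H B : Type*} [Field k] [Ring H] [Algebra k H]
    [Ring B] [Algebra k B] (Q : QuasiHopfAlgebra k H)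
    (R : RightComoduleAlgebra Q.toQuasiBialgebra B)
    (v : H →ₐ[k] B) (hv : IsComodAlgMorphismFromH R v)
    (E : B →ₗ[k] B) (hE : IsCanonicalProjection Q R v E) :
    ∀ a ∈ LinearMap.range E, ∀ (h : H) (m : ℕ) (d1 d2 : Fin m → H),
      Q.comul h = ∑ j, d1 j ⊗ₜ[k] d2 j →
      v h * a = ∑ j, E (v (d1 j) * a) * v (d2 j) := by
  rintro _ ⟨b, rfl⟩ h m d1 d2 hd
  have := St13.E_comm Q v R hv E hE (E b) h m d1 d2 hd
  rwa [St13.E_idem Q v R hv E hE b] at this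
end

section
/- Let H be a quasi-Hopf algebra, B a right H-comodule algebra, and v : H → B a morphism of right H-comodule algebras. Define E : B → B by E(b) = v(q¹)b₍₀₎v(βS(q²b₍₁₎)) and h▷b = E(v(h)b). Then for b ∈ B: E(b) = b if and only if ρ(b) = (x¹▷b)v(x²) ⊗ x³, where Φ⁻¹ = x¹⊗x²⊗x³. -/
open TensorProduct BigOperators

namespace St14

section gen
variable {k : Type*} [Field k]

theorem exists_list {M N : Type*} [AddCommGroup M] [Module k M] [AddCommGroup N] [Module k N]
    (t : M ⊗[k] N) : ∃ l : List (M × N), t = (l.map fun p => p.1 ⊗ₜ[k] p.2).sum := by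
  induction t using TensorProduct.induction_on with
  | zero => exact ⟨[], by simp⟩
  | tmul x y => exact ⟨[(x, y)], by simp⟩
  | add x y hx hy =>
    obtain ⟨l, hl⟩ := hx
    obtain ⟨m, hm⟩ := hy
    exact ⟨l ++ m, by simp [← hl, ← hm]⟩

theorem exists_list3 {M N P : Type*} [AddCommGroup M] [Module k M] [AddCommGroup N] [Module k N]
    [AddCommGroup P] [Module k P]
    (t : M ⊗[k] (N ⊗[k] P)) :
    ∃ l : List (M × N × P), t = (l.map fun p => p.1 ⊗ₜ[k] (p.2.1 ⊗ₜ[k] p.2.2)).sum := by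
  induction t using TensorProduct.induction_on with
  | zero => exact ⟨[], by simp⟩
  | tmul x y =>
    obtain ⟨l, rfl⟩ := exists_list y
    refine ⟨l.map fun p => (x, p), ?_⟩
    induction l with
    | nil => simp
    | cons a l ih => simp [TensorProduct.tmul_add, ih]
  | add x y hx hy =>
    obtain ⟨l, hl⟩ := hx
    obtain ⟨m, hm⟩ := hy
    exact ⟨l ++ m, by simp [← hl, ← hm]⟩

theorem exists_fin {M N : Type*} [AddCommGroup M] [Module k M] [AddCommGroup N] [Module k N]
    (t : M ⊗[k] N) : ∃ (n : ℕ) (a : Fin n → M) (b : Fin n → N), t = ∑ i, a i ⊗ₜ[k] b i := by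
  obtain ⟨l, hl⟩ := exists_list t
  refine ⟨l.length, fun i => (l.get i).1, fun i => (l.get i).2, ?_⟩
  rw [hl, ← List.sum_ofFn]
  congr 1
  apply List.ext_get <;> simp

theorem exists_fin3 {M N P : Type*} [AddCommGroup M] [Module k M] [AddCommGroup N] [Module k N]
    [AddCommGroup P] [Module k P] (t : M ⊗[k] (N ⊗[k] P)) :
    ∃ (n : ℕ) (a : Fin n → M) (b : Fin n → N) (c : Fin n → P),
      t = ∑ i, a i ⊗ₜ[k] (b i ⊗ₜ[k] c i) := by
  obtain ⟨l, hl⟩ := exists_list3 t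
  refine ⟨l.length, fun i => (l.get i).1, fun i => (l.get i).2.1, fun i => (l.get i).2.2, ?_⟩
  rw [hl, ← List.sum_ofFn]
  congr 1
  apply List.ext_get <;> simp

@[elab_as_elim]
theorem ind3 {M N P : Type*} [AddCommGroup M] [Module k M] [AddCommGroup N] [Module k N]
    [AddCommGroup P] [Module k P] {C : M ⊗[k] (N ⊗[k] P) → Prop} (t : M ⊗[k] (N ⊗[k] P))
    (h0 : C 0) (ha : ∀ x y, C x → C y → C (x + y))
    (hp : ∀ x y z, C (x ⊗ₜ[k] (y ⊗ₜ[k] z))) : C t := by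
  obtain ⟨l, rfl⟩ := exists_list3 t
  induction l with
  | nil => simpa using h0
  | cons a l ih =>
    rw [List.map_cons, List.sum_cons]
    exact ha _ _ (hp _ _ _) ih

@[elab_as_elim]
theorem ind4 {M N P L : Type*} [AddCommGroup M] [Module k M] [AddCommGroup N] [Module k N]
    [AddCommGroup P] [Module k P] [AddCommGroup L] [Module k L]
    {C : M ⊗[k] (N ⊗[k] (P ⊗[k] L)) → Prop} (t : M ⊗[k] (N ⊗[k] (P ⊗[k] L)))
    (h0 : C 0) (ha : ∀ x y, C x → C y → C (x + y))
    (hp : ∀ x y z w, C (x ⊗ₜ[k] (y ⊗ₜ[k] (z ⊗ₜ[k] w)))) : C t := by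
  refine ind3 t h0 ha fun x y z => ?_
  induction z using TensorProduct.induction_on with
  | zero => simpa using h0
  | tmul z w => exact hp _ _ _ _
  | add z w hz hw => rw [TensorProduct.tmul_add, TensorProduct.tmul_add]; exact ha _ _ hz hw
end gen

section qb
variable {k H : Type*} [Field k] [Ring H] [Algebra k H] (Q : QuasiBialgebra k H)

/-- Apply the counit on the first of three legs. -/
noncomputable def uu : H ⊗[k] (H ⊗[k] H) →ₐ[k] H ⊗[k] H :=
  (Algebra.TensorProduct.lid k (H ⊗[k] H)).toAlgHom.comp
    (Algebra.TensorProduct.map Q.counit (AlgHom.id k (H ⊗[k] H)))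

theorem uu_tmul (x : H) (y : H ⊗[k] H) : uu Q (x ⊗ₜ y) = Q.counit x • y := by
  simp [uu]

/-- Apply the counit on the first two of four legs. -/
noncomputable def th : H ⊗[k] (H ⊗[k] (H ⊗[k] H)) →ₐ[k] H ⊗[k] H :=
  (Algebra.TensorProduct.lid k (H ⊗[k] H)).toAlgHom.comp
    (Algebra.TensorProduct.map Q.counit (uu Q))

theorem th_tmul (x : H) (y : H ⊗[k] (H ⊗[k] H)) : th Q (x ⊗ₜ y) = Q.counit x • uu Q y := by
  simp [th]

/-- Apply the counit on the first two of three legs. -/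
noncomputable def ww : H ⊗[k] (H ⊗[k] H) →ₐ[k] H :=
  (Algebra.TensorProduct.lid k H).toAlgHom.comp
    (Algebra.TensorProduct.map Q.counit ((Algebra.TensorProduct.lid k H).toAlgHom.comp
      (Algebra.TensorProduct.map Q.counit (AlgHom.id k H))))

theorem ww_tmul (x y z : H) : ww Q (x ⊗ₜ (y ⊗ₜ z)) = Q.counit x • Q.counit y • z := by
  simp [ww, smul_smul, mul_comm]

theorem ww_Phi : ww Q Q.Phi = 1 := by
  have h : ∀ y : H ⊗[k] (H ⊗[k] H), ww Q y =
    (Algebra.TensorProduct.lid k H) ((Algebra.TensorProduct.map Q.counit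
      (Algebra.TensorProduct.lid k H).toAlgHom) ((Algebra.TensorProduct.map (AlgHom.id k H)
      (Algebra.TensorProduct.map Q.counit (AlgHom.id k H))) y)) := by
    intro y
    induction y using ind3 with
    | h0 => simp
    | ha x y hx hy => simp only [map_add, hx, hy]
    | hp x y z =>
    simp [ww, smul_smul, mul_comm]
  rw [h, Q.counit_Phi, map_one, map_one]

theorem counit_left (h : H) :
    Algebra.TensorProduct.lid k H ((Algebra.TensorProduct.map Q.counit (AlgHom.id k H))
      (Q.comul h)) = h := by
  rw [Q.counit_comul_left]; simp

theorem uu_Phi : uu Q Q.Phi = 1 := by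
  have h1 : ∀ y, th Q (1 ⊗ₜ y) = uu Q y := fun y => by rw [th_tmul]; simp
  have h2 : ∀ y, th Q ((Algebra.TensorProduct.map (AlgHom.id k H)
          (((Algebra.TensorProduct.assoc k k k H H H).toAlgHom).comp
            (Algebra.TensorProduct.map Q.comul (AlgHom.id k H)))) y) = uu Q y := by
    intro y
    induction y using ind3 with
    | h0 => simp
    | ha x y hx hy => simp only [map_add, hx, hy]
    | hp x y z =>
    have : ∀ w : H ⊗[k] H, uu Q ((Algebra.TensorProduct.assoc k k k H H H) (w ⊗ₜ z))
        = (Algebra.TensorProduct.lid k H ((Algebra.TensorProduct.map Q.counit (AlgHom.id k H)) w))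
          ⊗ₜ z := by
      intro w
      induction w using TensorProduct.induction_on with
      | zero => simp
      | tmul a b => simp [uu_tmul, TensorProduct.smul_tmul']
      | add a b ha hb => simp only [TensorProduct.add_tmul, map_add, ha, hb]
    simp only [Algebra.TensorProduct.map_tmul, th_tmul, AlgHom.comp_apply, uu_tmul, AlgHom.coe_id, id]
    congr 1
    refine (this _).trans ?_
    rw [counit_left]
  have h3 : ∀ y, th Q ((Algebra.TensorProduct.map (AlgHom.id k H)
          (Algebra.TensorProduct.map (AlgHom.id k H)
            (Algebra.TensorProduct.includeLeft : H →ₐ[k] H ⊗[k] H))) y) = ww Q y ⊗ₜ 1 := by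
    intro y
    induction y using ind3 with
    | h0 => simp
    | ha x y hx hy => simp only [map_add, hx, hy, TensorProduct.add_tmul]
    | hp x y z =>
    simp [th_tmul, uu_tmul, ww_tmul, TensorProduct.smul_tmul']
  have h4 : ∀ y, th Q ((Algebra.TensorProduct.map (AlgHom.id k H)
          (Algebra.TensorProduct.map (AlgHom.id k H) Q.comul)) y) = Q.comul (ww Q y) := by
    intro y
    induction y using ind3 with
    | h0 => simp
    | ha x y hx hy => simp only [map_add, hx, hy]
    | hp x y z =>
    simp [th_tmul, uu_tmul, ww_tmul]
  have h5 : ∀ y, th Q ((Algebra.TensorProduct.assoc k k k H H (H ⊗[k] H))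
          ((Algebra.TensorProduct.map Q.comul (AlgHom.id k (H ⊗[k] H))) y)) = uu Q y := by
    intro y
    induction y using TensorProduct.induction_on with
    | zero => simp
    | add x y hx hy => simp only [map_add, hx, hy]
    | tmul x z =>
      have : ∀ w : H ⊗[k] H, th Q ((Algebra.TensorProduct.assoc k k k H H (H ⊗[k] H)) (w ⊗ₜ z))
        = Q.counit (Algebra.TensorProduct.lid k H
          ((Algebra.TensorProduct.map Q.counit (AlgHom.id k H)) w)) • z := by
        intro w
        induction w using TensorProduct.induction_on with
        | zero => simp
        | tmul a b => simp [uu_tmul, th_tmul, smul_smul]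
        | add a b ha hb => simp only [TensorProduct.add_tmul, map_add, ha, hb, add_smul]
      rw [Algebra.TensorProduct.map_tmul, uu_tmul]
      refine (this _).trans ?_
      rw [counit_left]
  have key := congrArg (th Q) Q.pentagon
  rw [map_mul, map_mul, map_mul, h1, h2, h3, h4, h5, ww_Phi, map_one, one_mul, ← Algebra.TensorProduct.one_def,
    mul_one] at key
  have inv : uu Q Q.PhiInv * uu Q Q.Phi = 1 := by rw [← map_mul, Q.inv_mul_Phi, map_one]
  calc uu Q Q.Phi = (uu Q Q.PhiInv * uu Q Q.Phi) * uu Q Q.Phi := by rw [inv, one_mul]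
    _ = uu Q Q.PhiInv * uu Q Q.Phi := by rw [mul_assoc, key]
    _ = 1 := inv

theorem uu_PhiInv : uu Q Q.PhiInv = 1 := by
  have inv : uu Q Q.PhiInv * uu Q Q.Phi = 1 := by rw [← map_mul, Q.inv_mul_Phi, map_one]
  rwa [uu_Phi, mul_one] at inv

end qb

section qh
variable {k H : Type*} [Field k] [Ring H] [Algebra k H] (Q : QuasiHopfAlgebra k H)

/-- `a ⊗ b ↦ S(a) α b`. -/
noncomputable def AL : H ⊗[k] H →ₗ[k] H :=
  LinearMap.mul' k H ∘ₗ TensorProduct.map (LinearMap.mulRight k Q.alpha ∘ₗ Q.S) LinearMap.id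

theorem AL_tmul (a b : H) : AL Q (a ⊗ₜ b) = Q.S a * Q.alpha * b := by simp [AL]

/-- `a ⊗ b ↦ a β S(b)`. -/
noncomputable def AR : H ⊗[k] H →ₗ[k] H :=
  LinearMap.mul' k H ∘ₗ TensorProduct.map (LinearMap.mulRight k Q.beta) Q.S

theorem AR_tmul (a b : H) : AR Q (a ⊗ₜ b) = a * Q.beta * Q.S b := by simp [AR]

/-- `a ⊗ b ⊗ c ↦ a β S(b) α c`. -/
noncomputable def M3 : H ⊗[k] (H ⊗[k] H) →ₗ[k] H :=
  LinearMap.mul' k H ∘ₗ TensorProduct.map (LinearMap.mulRight k Q.beta) (AL Q)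

theorem M3_tmul (a b c : H) :
    M3 Q (a ⊗ₜ (b ⊗ₜ c)) = a * Q.beta * (Q.S b * Q.alpha * c) := by simp [M3, AL_tmul]

theorem AL_comul (h : H) : AL Q (Q.comul h) = Q.counit h • Q.alpha := by
  obtain ⟨n, a, b, hab⟩ := exists_fin (Q.comul h)
  rw [← Q.antipode_left h n a b hab, hab]
  simp [AL_tmul]

theorem AR_comul (h : H) : AR Q (Q.comul h) = Q.counit h • Q.beta := by
  obtain ⟨n, a, b, hab⟩ := exists_fin (Q.comul h)
  rw [← Q.antipode_right h n a b hab, hab]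
  simp [AR_tmul]

theorem M3_Phi : M3 Q Q.Phi = 1 := by
  obtain ⟨n, a, b, c, habc⟩ := exists_fin3 Q.Phi
  rw [← Q.antipode_Phi n a b c habc, habc]
  simp [M3_tmul, mul_assoc]

end qh

section main
variable {k H B : Type*} [Field k] [Ring H] [Algebra k H]
    [Ring B] [Algebra k B] (Q : QuasiHopfAlgebra k H)
    (R : RightComoduleAlgebra Q.toQuasiBialgebra B)
    (v : H →ₐ[k] B)

/-- `b ⊗ h ⊗ g ↦ b v(β S(h) α g)`. -/
noncomputable def GG : B ⊗[k] (H ⊗[k] H) →ₗ[k] B :=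
  LinearMap.mul' k B ∘ₗ TensorProduct.map LinearMap.id
    (v.toLinearMap ∘ₗ LinearMap.mulLeft k Q.beta ∘ₗ AL Q)

theorem GG_tmul (b : B) (h g : H) :
    GG Q v (b ⊗ₜ (h ⊗ₜ g)) = b * v (Q.beta * (Q.S h * Q.alpha * g)) := by simp [GG, AL_tmul]

/-- `b ⊗ h ↦ b ⊗ h ⊗ 1`. -/
noncomputable def io : B ⊗[k] H →ₐ[k] B ⊗[k] (H ⊗[k] H) :=
  Algebra.TensorProduct.map (AlgHom.id k B) Algebra.TensorProduct.includeLeft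

theorem io_tmul (b : B) (h : H) : (io : B ⊗[k] H →ₐ[k] _) (b ⊗ₜ h) = b ⊗ₜ (h ⊗ₜ 1) := by
  simp [io]

/-- `(ρ ⊗ id)` -/
noncomputable def r2 : B ⊗[k] H →ₐ[k] B ⊗[k] (H ⊗[k] H) :=
  (Algebra.TensorProduct.assoc k k k B H H).toAlgHom.comp
    (Algebra.TensorProduct.map R.coact (AlgHom.id k H))

theorem assoc_io (w : B ⊗[k] H) (h : H) :
    (Algebra.TensorProduct.assoc k k k B H H) (w ⊗ₜ h) = io w * (1 ⊗ₜ (1 ⊗ₜ h)) := by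
  induction w using TensorProduct.induction_on with
  | zero => simp
  | tmul a b => simp [io_tmul]
  | add a b ha hb => simp only [TensorProduct.add_tmul, map_add, ha, hb, add_mul]

theorem r2_tmul (b : B) (h : H) :
    r2 Q R (b ⊗ₜ h) = io (R.coact b) * (1 ⊗ₜ (1 ⊗ₜ h)) := by
  rw [← assoc_io]
  rfl

/-- `(id ⊗ Δ)` -/
noncomputable def d2 : B ⊗[k] H →ₐ[k] B ⊗[k] (H ⊗[k] H) :=
  Algebra.TensorProduct.map (AlgHom.id k B) Q.comul

theorem d2_tmul (b : B) (h : H) : d2 (B := B) Q (b ⊗ₜ h) = b ⊗ₜ Q.comul h := by simp [d2]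

theorem coassoc (b : B) : R.PhiRho * r2 Q R (R.coact b) = d2 Q (R.coact b) * R.PhiRho :=
  R.coact_coassoc b

theorem coassoc' (b : B) :
    r2 Q R (R.coact b) = R.PhiRhoInv * d2 Q (R.coact b) * R.PhiRho := by
  rw [mul_assoc, ← coassoc, ← mul_assoc, R.inv_mul_PhiRho, one_mul]

theorem coassoc'' (b : B) :
    R.PhiRhoInv * d2 Q (R.coact b) = r2 Q R (R.coact b) * R.PhiRhoInv := by
  rw [coassoc', mul_assoc _ R.PhiRho, R.PhiRho_mul_inv, mul_one]

/-- `b ⊗ h ↦ ε(h) b`. -/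
noncomputable def ep : B ⊗[k] H →ₐ[k] B :=
  (Algebra.TensorProduct.rid k k B).toAlgHom.comp
    (Algebra.TensorProduct.map (AlgHom.id k B) Q.counit)

theorem ep_tmul (b : B) (h : H) : ep (B := B) Q (b ⊗ₜ h) = Q.counit h • b := by simp [ep]

theorem ep_coact (b : B) : ep Q (R.coact b) = b := by
  have := congrArg (Algebra.TensorProduct.rid k k B) (R.counit_coact b)
  simpa [ep] using this

variable {Q R v} {E : B →ₗ[k] B}


theorem PhiRhoInv_eq (hv : IsComodAlgMorphismFromH R v)
    :
    R.PhiRhoInv = (Algebra.TensorProduct.map v (AlgHom.id k (H ⊗[k] H))) Q.PhiInv := by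
  have h1 : R.PhiRho * (Algebra.TensorProduct.map v (AlgHom.id k (H ⊗[k] H))) Q.PhiInv = 1 := by
    rw [hv.2, ← map_mul, Q.Phi_mul_inv, map_one]
  calc R.PhiRhoInv = R.PhiRhoInv * (R.PhiRho *
        (Algebra.TensorProduct.map v (AlgHom.id k (H ⊗[k] H))) Q.PhiInv) := by rw [h1, mul_one]
    _ = _ := by rw [← mul_assoc, R.inv_mul_PhiRho, one_mul]


theorem E_eq (hv : IsComodAlgMorphismFromH R v) (hE : IsCanonicalProjection Q R v E)
    (b : B) : E b = GG Q v (R.PhiRho * io (R.coact b)) := by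
  obtain ⟨n, X1, X2, X3, hX⟩ := exists_fin3 Q.Phi
  obtain ⟨p, b0, b1, hb⟩ := exists_fin (R.coact b)
  rw [hE b n X1 X2 X3 hX p b0 b1 hb, hv.2, hX, hb]
  simp only [map_sum, Algebra.TensorProduct.map_tmul, io_tmul, Finset.sum_mul, Finset.mul_sum,
    Algebra.TensorProduct.tmul_mul_tmul, AlgHom.coe_id, id, GG_tmul, mul_one, Q.S_mul, Q.S_Sinv]
  rw [Finset.sum_comm]
  simp only [mul_assoc]

theorem E_mul_v (hv : IsComodAlgMorphismFromH R v) (hE : IsCanonicalProjection Q R v E)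
    (b : B) (h : H) : E (b * v h) = Q.counit h • E b := by
  have key : ∀ t : B ⊗[k] (H ⊗[k] H),
      GG Q v (t * io ((Algebra.TensorProduct.map v (AlgHom.id k H)) (Q.comul h)))
      = Q.counit h • GG Q v t := by
    intro t
    induction t using ind3 with
    | h0 => simp
    | ha x y hx hy => simp only [add_mul, map_add, hx, hy, smul_add]
    | hp x y z =>
      have : ∀ w : H ⊗[k] H, GG Q v (x ⊗ₜ (y ⊗ₜ z) *
          io ((Algebra.TensorProduct.map v (AlgHom.id k H)) w)) =
          x * v (AR Q w) * v (Q.S y * Q.alpha * z) := by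
        intro w
        induction w using TensorProduct.induction_on with
        | zero => simp
        | tmul a b => simp [io_tmul, GG_tmul, AR_tmul, Q.S_mul, mul_assoc]
        | add a b ha hb => simp only [map_add, mul_add, add_mul, ha, hb]
      rw [this, AR_comul, GG_tmul]
      simp [mul_assoc]
  rw [E_eq hv hE, E_eq hv hE b, map_mul R.coact, map_mul io, hv.1, ← mul_assoc, key]

/-- `b ⊗ h ↦ E(b) v(h)`. -/
noncomputable def E2 (v : H →ₐ[k] B) (E : B →ₗ[k] B) : B ⊗[k] H →ₗ[k] B :=
  LinearMap.mul' k B ∘ₗ TensorProduct.map E v.toLinearMap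

theorem E2_tmul (b : B) (h : H) : E2 v E (b ⊗ₜ h) = E b * v h := by simp [E2]

theorem E2_eq (hv : IsComodAlgMorphismFromH R v) (hE : IsCanonicalProjection Q R v E)
    (t : B ⊗[k] H) : E2 v E t = GG Q v (R.PhiRho * r2 Q R t) := by
  induction t using TensorProduct.induction_on with
  | zero => simp
  | add a b ha hb => simp only [map_add, mul_add, ha, hb]
  | tmul b h =>
    have key : ∀ t : B ⊗[k] (H ⊗[k] H), GG Q v (t * (1 ⊗ₜ (1 ⊗ₜ h))) = GG Q v t * v h := by
      intro t
      induction t using ind3 with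
      | h0 => simp
      | ha x y hx hy => simp only [add_mul, map_add, hx, hy]
      | hp x y z => simp [GG_tmul, mul_assoc]
    rw [E2_tmul, r2_tmul, ← mul_assoc, key, ← E_eq hv hE]

theorem E2_coact (hv : IsComodAlgMorphismFromH R v) (hE : IsCanonicalProjection Q R v E)
    (b : B) : E2 v E (R.coact b) = b := by
  rw [E2_eq hv hE, coassoc]
  have key : ∀ t : B ⊗[k] H, GG Q v (d2 Q t * R.PhiRho) = ep Q t := by
    intro t
    induction t using TensorProduct.induction_on with
    | zero => simp
    | add a b ha hb => simp only [map_add, add_mul, ha, hb]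
    | tmul b h =>
      have h1 : ∀ (w : H ⊗[k] H) (y1 y2 y3 : H), GG Q v ((b ⊗ₜ w) * (v y1 ⊗ₜ (y2 ⊗ₜ y3)))
          = b * v (y1 * Q.beta * (Q.S y2 * AL Q w * y3)) := by
        intro w y1 y2 y3
        induction w using TensorProduct.induction_on with
        | zero => simp
        | tmul a b => simp [GG_tmul, AL_tmul, Q.S_mul, mul_assoc]
        | add a b ha hb => simp only [TensorProduct.tmul_add, map_add, mul_add, add_mul, ha, hb]
      have h2 : ∀ y : H ⊗[k] (H ⊗[k] H), GG Q v (d2 Q (b ⊗ₜ h) *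
          (Algebra.TensorProduct.map v (AlgHom.id k (H ⊗[k] H))) y)
          = Q.counit h • (b * v (M3 Q y)) := by
        intro y
        induction y using ind3 with
        | h0 => simp
        | ha x y hx hy => simp only [mul_add, map_add, hx, hy, smul_add]
        | hp x y z =>
          rw [Algebra.TensorProduct.map_tmul, d2_tmul, AlgHom.coe_id, id, h1, AL_comul, M3_tmul]
          simp
      rw [hv.2, h2, M3_Phi, ep_tmul]
      simp
  rw [key, ep_coact]

/-- `b ⊗ h ⊗ g ↦ E(b) v(h) ⊗ g`. -/
noncomputable def E3 (v : H →ₐ[k] B) (E : B →ₗ[k] B) : B ⊗[k] (H ⊗[k] H) →ₗ[k] B ⊗[k] H :=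
  TensorProduct.map (E2 v E) LinearMap.id ∘ₗ (TensorProduct.assoc k B H H).symm.toLinearMap

theorem E3_tmul (b : B) (h g : H) : E3 v E (b ⊗ₜ (h ⊗ₜ g)) = (E b * v h) ⊗ₜ g := by
  simp [E3, E2_tmul]

/-- `T(b) = E(v(x¹) b) v(x²) ⊗ x³`. -/
noncomputable def TT (R : RightComoduleAlgebra Q.toQuasiBialgebra B) (v : H →ₐ[k] B)
    (E : B →ₗ[k] B) : B →ₗ[k] B ⊗[k] H :=
  E3 v E ∘ₗ LinearMap.mulLeft k R.PhiRhoInv ∘ₗ (TensorProduct.mk k B (H ⊗[k] H)).flip 1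

theorem TT_apply (b : B) : TT R v E b = E3 v E (R.PhiRhoInv * (b ⊗ₜ 1)) := by
  simp [TT]

theorem E3_mul_PhiRhoInv (hv : IsComodAlgMorphismFromH R v) (hE : IsCanonicalProjection Q R v E)
    (t : B ⊗[k] (H ⊗[k] H)) : E3 v E (t * R.PhiRhoInv) = E3 v E t := by
  have key : ∀ y : H ⊗[k] (H ⊗[k] H),
      E3 v E (t * (Algebra.TensorProduct.map v (AlgHom.id k (H ⊗[k] H))) y)
      = E3 v E (t * (1 ⊗ₜ uu Q.toQuasiBialgebra y)) := by
    intro y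
    induction y using ind3 with
    | h0 => simp
    | ha x y hx hy => simp only [mul_add, map_add, hx, hy, TensorProduct.tmul_add]
    | hp x y z =>
      induction t using ind3 with
      | h0 => simp
      | ha x y hx hy => simp only [add_mul, map_add, hx, hy]
      | hp a b c =>
        simp [E3_tmul, uu_tmul, E_mul_v hv hE, TensorProduct.smul_tmul']
  rw [PhiRhoInv_eq hv, key, uu_PhiInv, ← Algebra.TensorProduct.one_def, mul_one]

theorem E3_r2 (hv : IsComodAlgMorphismFromH R v) (hE : IsCanonicalProjection Q R v E)
    (t : B ⊗[k] H) : E3 v E (r2 Q R t) = t := by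
  induction t using TensorProduct.induction_on with
  | zero => simp
  | add a b ha hb => simp only [map_add, ha, hb]
  | tmul b h =>
    have : ∀ w : B ⊗[k] H, E3 v E (io w * (1 ⊗ₜ (1 ⊗ₜ h))) = E2 v E w ⊗ₜ h := by
      intro w
      induction w using TensorProduct.induction_on with
      | zero => simp
      | tmul a b => simp [io_tmul, E3_tmul, E2_tmul]
      | add a b ha hb => simp only [map_add, add_mul, TensorProduct.add_tmul, ha, hb]
    rw [r2_tmul, this, E2_coact hv hE]

theorem TT_mul_v (hv : IsComodAlgMorphismFromH R v) (hE : IsCanonicalProjection Q R v E)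
    (b : B) (h : H) : TT R v E (b * v h) = Q.counit h • TT R v E b := by
  have key : ∀ t : B ⊗[k] (H ⊗[k] H), E3 v E (t * ((b * v h) ⊗ₜ 1)) =
      Q.counit h • E3 v E (t * (b ⊗ₜ 1)) := by
    intro t
    induction t using ind3 with
    | h0 => simp
    | ha x y hx hy => simp only [add_mul, map_add, hx, hy, smul_add]
    | hp x y z =>
      simp [E3_tmul, ← mul_assoc, E_mul_v hv hE, TensorProduct.smul_tmul']
  rw [TT_apply, TT_apply, key]

theorem TT_coact (hv : IsComodAlgMorphismFromH R v) (hE : IsCanonicalProjection Q R v E)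
    (b : B) (D2 : B ⊗[k] H →ₗ[k] B ⊗[k] H)
    (hD : ∀ c h, D2 (c ⊗ₜ h) = TT R v E c * R.coact (v h)) : D2 (R.coact b) = R.coact b := by
  have key : ∀ t : B ⊗[k] H, D2 t = E3 v E (R.PhiRhoInv * d2 Q t) := by
    intro t
    induction t using TensorProduct.induction_on with
    | zero => simp
    | add a b ha hb => simp only [map_add, mul_add, ha, hb]
    | tmul b h =>
      have : ∀ (w : H ⊗[k] H) (t : B ⊗[k] (H ⊗[k] H)), E3 v E (t * (b ⊗ₜ w)) =
          E3 v E (t * (b ⊗ₜ 1)) * (Algebra.TensorProduct.map v (AlgHom.id k H)) w := by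
        intro w t
        induction t using ind3 with
        | h0 => simp
        | ha x y hx hy => simp only [add_mul, map_add, hx, hy]
        | hp x y z =>
          induction w using TensorProduct.induction_on with
          | zero => simp
          | add a b ha hb => simp only [TensorProduct.tmul_add, map_add, mul_add, ha, hb]
          | tmul a b => simp [E3_tmul, mul_assoc]
      rw [hD, hv.1, TT_apply, d2_tmul, this (Q.comul h)]
  rw [key, coassoc'', E3_mul_PhiRhoInv hv hE, E3_r2 hv hE]

end main

section abstr
set_option synthInstance.maxSize 2000
set_option maxSynthPendingDepth 6
set_option synthInstance.maxHeartbeats 400000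
set_option maxHeartbeats 2000000
variable {k H B A : Type*} [Field k] [Ring H] [Algebra k H]
    [Ring B] [Algebra k B] [Ring A] [Algebra k A] {Q : QuasiHopfAlgebra k H}
    {R : RightComoduleAlgebra Q.toQuasiBialgebra B}
    {v : H →ₐ[k] B} {D : B →ₗ[k] A} {δ : H →ₐ[k] A}

/-- `b ⊗ h ↦ D(b) δ(h)`. -/
noncomputable def DD (D : B →ₗ[k] A) (δ : H →ₐ[k] A) : B ⊗[k] H →ₗ[k] A :=
  LinearMap.mul' k A ∘ₗ TensorProduct.map D δ.toLinearMap

theorem DD_tmul (b : B) (h : H) : DD D δ (b ⊗ₜ h) = D b * δ h := by simp [DD]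

/-- `b ⊗ h ⊗ g ⊗ l ↦ D(b) δ(h β S(g) α l)`. -/
noncomputable def K4 (Q : QuasiHopfAlgebra k H) (D : B →ₗ[k] A) (δ : H →ₐ[k] A) :
    B ⊗[k] (H ⊗[k] (H ⊗[k] H)) →ₗ[k] A :=
  LinearMap.mul' k A ∘ₗ TensorProduct.map D (δ.toLinearMap ∘ₗ M3 Q)

theorem K4_tmul' (b : B) (w : H ⊗[k] (H ⊗[k] H)) :
    K4 Q D δ (b ⊗ₜ w) = D b * δ (M3 Q w) := by simp [K4]

theorem K4_tmul (b : B) (h g l : H) : K4 Q D δ (b ⊗ₜ (h ⊗ₜ (g ⊗ₜ l))) =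
    D b * δ (h * Q.beta * (Q.S g * Q.alpha * l)) := by simp [K4, M3_tmul]

/-- `b ⊗ h ⊗ g ↦ b ⊗ h ⊗ g ⊗ 1`. -/
noncomputable def jj : B ⊗[k] (H ⊗[k] H) →ₐ[k] B ⊗[k] (H ⊗[k] (H ⊗[k] H)) :=
  Algebra.TensorProduct.map (AlgHom.id k B)
          (Algebra.TensorProduct.map (AlgHom.id k H)
            (Algebra.TensorProduct.includeLeft : H →ₐ[k] H ⊗[k] H))

theorem jj_tmul (b : B) (h g : H) :
    (jj : B ⊗[k] (H ⊗[k] H) →ₐ[k] _) (b ⊗ₜ (h ⊗ₜ g)) = b ⊗ₜ (h ⊗ₜ (g ⊗ₜ 1)) := by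
  simp [jj]

/-- `ρ ⊗ id ⊗ id`. -/
noncomputable def r3 (R : RightComoduleAlgebra Q.toQuasiBialgebra B) :
    B ⊗[k] (H ⊗[k] H) →ₐ[k] B ⊗[k] (H ⊗[k] (H ⊗[k] H)) :=
  (Algebra.TensorProduct.assoc k k k B H (H ⊗[k] H)).toAlgHom.comp
          (Algebra.TensorProduct.map R.coact (AlgHom.id k (H ⊗[k] H)))

/-- `id ⊗ Δ ⊗ id`. -/
noncomputable def m3 (Q : QuasiHopfAlgebra k H) :
    B ⊗[k] (H ⊗[k] H) →ₐ[k] B ⊗[k] (H ⊗[k] (H ⊗[k] H)) :=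
  Algebra.TensorProduct.map (AlgHom.id k B)
          (((Algebra.TensorProduct.assoc k k k H H H).toAlgHom).comp
            (Algebra.TensorProduct.map Q.comul (AlgHom.id k H)))

/-- `id ⊗ id ⊗ Δ`. -/
noncomputable def l3 (Q : QuasiHopfAlgebra k H) :
    B ⊗[k] (H ⊗[k] H) →ₐ[k] B ⊗[k] (H ⊗[k] (H ⊗[k] H)) :=
  Algebra.TensorProduct.map (AlgHom.id k B)
          (Algebra.TensorProduct.map (AlgHom.id k H) Q.comul)

theorem pent (R : RightComoduleAlgebra Q.toQuasiBialgebra B) :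
    (1 ⊗ₜ Q.Phi) * m3 Q R.PhiRho * jj R.PhiRho = l3 Q R.PhiRho * r3 R R.PhiRho := R.pentagon

theorem pent' (R : RightComoduleAlgebra Q.toQuasiBialgebra B) :
    r3 R R.PhiRho * jj R.PhiRhoInv = l3 Q R.PhiRhoInv * ((1 ⊗ₜ Q.Phi) * m3 Q R.PhiRho) := by
  have h1 : l3 Q R.PhiRhoInv * l3 Q R.PhiRho = 1 := by
    rw [← map_mul, R.inv_mul_PhiRho, map_one]
  have h2 : jj R.PhiRho * jj R.PhiRhoInv = (1 : B ⊗[k] (H ⊗[k] (H ⊗[k] H))) := by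
    rw [← map_mul, R.PhiRho_mul_inv, map_one]
  calc r3 R R.PhiRho * jj R.PhiRhoInv
      = (l3 Q R.PhiRhoInv * l3 Q R.PhiRho) * r3 R R.PhiRho * jj R.PhiRhoInv := by
        rw [h1, one_mul]
    _ = l3 Q R.PhiRhoInv * (l3 Q R.PhiRho * r3 R R.PhiRho) * jj R.PhiRhoInv := by
        simp only [mul_assoc]
    _ = l3 Q R.PhiRhoInv * ((1 ⊗ₜ Q.Phi) * m3 Q R.PhiRho) * (jj R.PhiRho * jj R.PhiRhoInv) := by
        rw [← pent]; simp only [mul_assoc]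
    _ = _ := by rw [h2, mul_one]

/-- The counit on the middle leg. -/
noncomputable def em (Q : QuasiHopfAlgebra k H) : B ⊗[k] (H ⊗[k] H) →ₐ[k] B ⊗[k] H :=
  Algebra.TensorProduct.map (AlgHom.id k B) ((Algebra.TensorProduct.lid k H).toAlgHom.comp
    (Algebra.TensorProduct.map Q.counit (AlgHom.id k H)))

theorem em_tmul (b : B) (h g : H) : em Q (b ⊗ₜ (h ⊗ₜ g)) = b ⊗ₜ (Q.counit h • g) := by
  simp [em]

theorem em_PhiRho : em Q R.PhiRho = 1 := by
  have h : ∀ y : B ⊗[k] (H ⊗[k] H), em Q y = (Algebra.TensorProduct.map (AlgHom.id k B)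
      (Algebra.TensorProduct.lid k H).toAlgHom) ((Algebra.TensorProduct.map (AlgHom.id k B)
      (Algebra.TensorProduct.map Q.counit (AlgHom.id k H))) y) := by
    intro y
    induction y using ind3 with
    | h0 => simp
    | ha x y hx hy => simp only [map_add, hx, hy]
    | hp x y z => simp [em]
  rw [h, R.counit_PhiRho_mid, map_one]

/-- The counit on the right leg. -/
noncomputable def er (Q : QuasiHopfAlgebra k H) : B ⊗[k] (H ⊗[k] H) →ₐ[k] B ⊗[k] H :=
  Algebra.TensorProduct.map (AlgHom.id k B) ((Algebra.TensorProduct.rid k k H).toAlgHom.comp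
    (Algebra.TensorProduct.map (AlgHom.id k H) Q.counit))

theorem er_tmul (b : B) (h g : H) : er Q (b ⊗ₜ (h ⊗ₜ g)) = b ⊗ₜ (Q.counit g • h) := by
  simp [er]

theorem er_PhiRho : er Q R.PhiRho = 1 := by
  have h : ∀ y : B ⊗[k] (H ⊗[k] H), er Q y = (Algebra.TensorProduct.map (AlgHom.id k B)
      (Algebra.TensorProduct.rid k k H).toAlgHom) ((Algebra.TensorProduct.map (AlgHom.id k B)
      (Algebra.TensorProduct.map (AlgHom.id k H) Q.counit)) y) := by
    intro y
    induction y using ind3 with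
    | h0 => simp
    | ha x y hx hy => simp only [map_add, hx, hy]
    | hp x y z => simp [er]
  rw [h, R.counit_PhiRho_right, map_one]

theorem er_PhiRhoInv : er Q R.PhiRhoInv = 1 := by
  have inv : er Q R.PhiRhoInv * er Q R.PhiRho = 1 := by
    rw [← map_mul, R.inv_mul_PhiRho, map_one]
  rwa [er_PhiRho, mul_one] at inv

theorem K4_r3 (h0 : ∀ b, DD D δ (R.coact b) = 0) (t : B ⊗[k] (H ⊗[k] H)) :
    K4 Q D δ (r3 R t) = 0 := by
  induction t using ind3 with
  | h0 => simp
  | ha x y hx hy => simp only [map_add, hx, hy, add_zero]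
  | hp x y z =>
    have : ∀ w : B ⊗[k] H, K4 Q D δ
        ((Algebra.TensorProduct.assoc k k k B H (H ⊗[k] H)) (w ⊗ₜ (y ⊗ₜ z)))
        = DD D δ w * δ (Q.beta * (Q.S y * Q.alpha * z)) := by
      intro w
      induction w using TensorProduct.induction_on with
      | zero => simp
      | add a b ha hb => simp only [map_add, add_mul, TensorProduct.add_tmul, ha, hb]
      | tmul a b => simp [K4_tmul, DD_tmul, mul_assoc]
    refine (this (R.coact x)).trans ?_
    rw [h0, zero_mul]

theorem r3_io (t : B ⊗[k] H) : r3 R (io t) = jj (r2 Q R t) := by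
  induction t using TensorProduct.induction_on with
  | zero => simp
  | add a b ha hb => simp only [map_add, ha, hb]
  | tmul b h =>
    have : ∀ w : B ⊗[k] H,
        ((Algebra.TensorProduct.assoc k k k B H (H ⊗[k] H)) (w ⊗ₜ (h ⊗ₜ 1)))
        = jj (io w * (1 ⊗ₜ (1 ⊗ₜ h))) := by
      intro w
      induction w using TensorProduct.induction_on with
      | zero => simp
      | add a b ha hb => simp only [map_add, add_mul, TensorProduct.add_tmul, ha, hb]
      | tmul a b => simp [io_tmul, jj_tmul]
    rw [io_tmul, r2_tmul, ← this]
    rfl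

theorem K4_a (hv : IsComodAlgMorphismFromH R v)
    (hD : ∀ b h, D (b * v h) = Q.counit h • D b) (t : B ⊗[k] (H ⊗[k] (H ⊗[k] H))) :
    K4 Q D δ (t * jj R.PhiRho) = K4 Q D δ t := by
  have key : ∀ y : H ⊗[k] (H ⊗[k] H),
      K4 Q D δ (t * jj ((Algebra.TensorProduct.map v (AlgHom.id k (H ⊗[k] H))) y))
      = K4 Q D δ (t * jj (1 ⊗ₜ uu Q.toQuasiBialgebra y)) := by
    intro y
    induction y using ind3 with
    | h0 => simp
    | ha x y hx hy => simp only [mul_add, map_add, hx, hy, TensorProduct.tmul_add]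
    | hp x y z =>
      induction t using ind4 with
      | h0 => simp
      | ha x y hx hy => simp only [add_mul, map_add, hx, hy]
      | hp a b c d =>
        simp [K4_tmul, jj_tmul, uu_tmul, hD]
  rw [hv.2, key, uu_Phi, ← Algebra.TensorProduct.one_def, map_one, mul_one]

theorem K4_b (t : B ⊗[k] (H ⊗[k] (H ⊗[k] H))) (u : B ⊗[k] H) :
    K4 Q D δ (t * jj (d2 Q u)) = K4 Q D δ (t * (ep Q u ⊗ₜ 1)) := by
  induction u using TensorProduct.induction_on with
  | zero => simp
  | add a b ha hb => simp only [map_add, mul_add, TensorProduct.add_tmul, ha, hb]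
  | tmul c h =>
    induction t using ind4 with
    | h0 => simp
    | ha x y hx hy => simp only [add_mul, map_add, hx, hy]
    | hp x y z l =>
      have : ∀ w : H ⊗[k] H, K4 Q D δ (x ⊗ₜ (y ⊗ₜ (z ⊗ₜ l)) * jj (c ⊗ₜ w))
          = D (x * c) * δ (y * AR Q w * (Q.S z * Q.alpha * l)) := by
        intro w
        induction w using TensorProduct.induction_on with
        | zero => simp
        | add a b ha hb => simp only [map_add, add_mul, mul_add, TensorProduct.tmul_add, ha, hb]
        | tmul a b => simp [K4_tmul, jj_tmul, AR_tmul, Q.S_mul, mul_assoc]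
      rw [d2_tmul, this, AR_comul, ep_tmul]
      simp [K4_tmul]

theorem K4_c (m : B) (t : B ⊗[k] (H ⊗[k] (H ⊗[k] H))) :
    K4 Q D δ (t * m3 Q R.PhiRho * (m ⊗ₜ 1)) = K4 Q D δ (t * (m ⊗ₜ 1)) := by
  have key : ∀ y : B ⊗[k] (H ⊗[k] H), K4 Q D δ (t * m3 Q y * (m ⊗ₜ 1))
      = K4 Q D δ (t * (Algebra.TensorProduct.map (AlgHom.id k B)
        (Algebra.TensorProduct.includeRight.comp Algebra.TensorProduct.includeRight)) (em Q y)
          * (m ⊗ₜ 1)) := by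
    intro y
    induction y using ind3 with
    | h0 => simp
    | ha x y hx hy => simp only [mul_add, add_mul, map_add, hx, hy]
    | hp a b c =>
      induction t using ind4 with
      | h0 => simp
      | ha x y hx hy => simp only [add_mul, map_add, hx, hy]
      | hp x y z l =>
        have : ∀ w : H ⊗[k] H, K4 Q D δ (x ⊗ₜ (y ⊗ₜ (z ⊗ₜ l)) *
            (a ⊗ₜ (Algebra.TensorProduct.assoc k k k H H H) (w ⊗ₜ c)) * (m ⊗ₜ 1))
            = D (x * a * m) * δ (y * AR Q w * (Q.S z * Q.alpha * (l * c))) := by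
          intro w
          induction w using TensorProduct.induction_on with
          | zero => simp
          | add a b ha hb => simp only [map_add, add_mul, mul_add, TensorProduct.tmul_add,
              TensorProduct.add_tmul, ha, hb]
          | tmul a b => simp [K4_tmul, AR_tmul, Q.S_mul, mul_assoc]
        refine (this (Q.comul b)).trans ?_
        rw [AR_comul, em_tmul]
        simp [K4_tmul]
  rw [key, em_PhiRho, map_one, mul_one]

theorem K4_d (m : B) (t : B ⊗[k] (H ⊗[k] (H ⊗[k] H))) :
    K4 Q D δ (l3 Q R.PhiRhoInv * t * (m ⊗ₜ 1)) = K4 Q D δ (t * (m ⊗ₜ 1)) := by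
  have key : ∀ y : B ⊗[k] (H ⊗[k] H), K4 Q D δ (l3 Q y * t * (m ⊗ₜ 1))
      = K4 Q D δ ((Algebra.TensorProduct.map (AlgHom.id k B)
        Algebra.TensorProduct.includeLeft) (er Q y) * t * (m ⊗ₜ 1)) := by
    intro y
    induction y using ind3 with
    | h0 => simp
    | ha x y hx hy => simp only [add_mul, map_add, hx, hy]
    | hp a b c =>
      induction t using ind4 with
      | h0 => simp
      | ha x y hx hy => simp only [add_mul, mul_add, map_add, hx, hy]
      | hp x y z l =>
        have : ∀ w : H ⊗[k] H, K4 Q D δ ((a ⊗ₜ (b ⊗ₜ w)) * (x ⊗ₜ (y ⊗ₜ (z ⊗ₜ l))) * (m ⊗ₜ 1))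
            = D (a * x * m) * δ (b * y * Q.beta * (Q.S z * AL Q w * l)) := by
          intro w
          induction w using TensorProduct.induction_on with
          | zero => simp
          | add a b ha hb => simp only [map_add, add_mul, mul_add, TensorProduct.tmul_add, ha, hb]
          | tmul a b => simp [K4_tmul, AL_tmul, Q.S_mul, mul_assoc]
        refine (this (Q.comul c)).trans ?_
        rw [AL_comul, er_tmul]
        simp [K4_tmul]
  rw [key, er_PhiRhoInv, map_one, one_mul]

theorem D_zero (hv : IsComodAlgMorphismFromH R v)
    (hD : ∀ b h, D (b * v h) = Q.counit h • D b)
    (h0 : ∀ b, DD D δ (R.coact b) = 0) (m : B) : D m = 0 := by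
  have h := K4_r3 h0 (R.PhiRho * io (R.coact m))
  rw [map_mul (r3 R), r3_io, coassoc', map_mul jj, map_mul jj, ← mul_assoc, ← mul_assoc,
    K4_a hv hD, K4_b, ep_coact, pent', K4_d, K4_c] at h
  simpa [K4_tmul', M3_Phi] using h

end abstr

section fin
variable {k H B : Type*} [Field k] [Ring H] [Algebra k H]
    [Ring B] [Algebra k B] {Q : QuasiHopfAlgebra k H}
    {R : RightComoduleAlgebra Q.toQuasiBialgebra B}
    {v : H →ₐ[k] B} {E : B →ₗ[k] B}


theorem coact_E (hv : IsComodAlgMorphismFromH R v) (hE : IsCanonicalProjection Q R v E)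
    (b : B) : R.coact (E b) = TT R v E b := by
  have h := D_zero (D := R.coact.toLinearMap ∘ₗ E - TT R v E) (δ := R.coact.comp v) hv ?_ ?_ b
  · simpa [sub_eq_zero] using h
  · intro b h
    simp [E_mul_v hv hE, TT_mul_v hv hE, smul_sub]
  · intro b
    have h1 := TT_coact hv hE b (DD (TT R v E) (R.coact.comp v)) (fun c h => by simp [DD_tmul])
    have h2 : ∀ t, DD (R.coact.toLinearMap ∘ₗ E - TT R v E) (R.coact.comp v) t
        = R.coact (E2 v E t) - DD (TT R v E) (R.coact.comp v) t := by
      intro t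
      induction t using TensorProduct.induction_on with
      | zero => simp
      | add a b ha hb => simp only [map_add, ha, hb]; abel
      | tmul a b => simp [DD_tmul, E2_tmul, sub_mul]
    rw [h2, h1, E2_coact hv hE, sub_self]

theorem TT_sum (hv : IsComodAlgMorphismFromH R v)
    (b : B) (n : ℕ) (x1 x2 x3 : Fin n → H)
    (hx : Q.PhiInv = ∑ i, x1 i ⊗ₜ[k] (x2 i ⊗ₜ[k] x3 i)) :
    TT R v E b = ∑ i, (E (v (x1 i) * b) * v (x2 i)) ⊗ₜ[k] x3 i := by
  rw [TT_apply, PhiRhoInv_eq hv, hx]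
  simp [Finset.sum_mul, E3_tmul]

theorem ep_TT (b : B) : ep Q (TT R v E b) = E b := by
  have key : ∀ y : B ⊗[k] (H ⊗[k] H),
      ep Q (E3 v E (y * (b ⊗ₜ 1))) = E2 v E (er Q y * (b ⊗ₜ 1)) := by
    intro y
    induction y using ind3 with
    | h0 => simp
    | ha x y hx hy => simp only [add_mul, map_add, hx, hy]
    | hp a b c => simp [E3_tmul, E2_tmul, er_tmul, ep_tmul]
  rw [TT_apply, key, er_PhiRhoInv, one_mul, E2_tmul]
  simp

end fin

end St14


/-- `E(b) = b` if and only if `ρ(b) = (x¹ ▷ b)v(x²) ⊗ x³`. -/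
theorem statement14 {k H B : Type*} [Field k] [Ring H] [Algebra k H]
    [Ring B] [Algebra k B] (Q : QuasiHopfAlgebra k H)
    (R : RightComoduleAlgebra Q.toQuasiBialgebra B)
    (v : H →ₐ[k] B) (hv : IsComodAlgMorphismFromH R v)
    (E : B →ₗ[k] B) (hE : IsCanonicalProjection Q R v E) :
    ∀ (b : B) (n : ℕ) (x1 x2 x3 : Fin n → H),
      Q.PhiInv = ∑ i, x1 i ⊗ₜ[k] (x2 i ⊗ₜ[k] x3 i) →
      (E b = b ↔ R.coact b = ∑ i, (E (v (x1 i) * b) * v (x2 i)) ⊗ₜ[k] x3 i) := by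
  intro b n x1 x2 x3 hx
  rw [← St14.TT_sum hv b n x1 x2 x3 hx]
  constructor
  · intro h
    rw [← St14.coact_E hv hE, h]
  · intro h
    have := congrArg (St14.ep Q) h
    rw [St14.ep_coact, St14.ep_TT] at this
    exact this.symm
end

section
/- Let H be a quasi-Hopf algebra, B a right H-comodule algebra, and v : H → B a morphism of right H-comodule algebras. Define E : B → B by E(b) = v(q¹)b₍₀₎v(βS(q²b₍₁₎)), set A = E(B) and h▷b = E(v(h)b). Then for all a ∈ A and h ∈ H: ρ(a v(h)) = (x¹▷a)v(x²h₁) ⊗ x³h₂, where Φ⁻¹ = x¹⊗x²⊗x³; that is, the map Ψ : A#H → B, Ψ(a#h) = a v(h), satisfies ρ∘Ψ = (Ψ⊗id)∘ρ_{A#H}, where ρ_{A#H}(a#h) = (x¹▷a # x²h₁)⊗x³h₂. -/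
open TensorProduct BigOperators

namespace QH

section reps
variable {k M N P : Type*} [Field k] [AddCommGroup M] [Module k M] [AddCommGroup N] [Module k N]
  [AddCommGroup P] [Module k P]

theorem exists_fin2 (t : M ⊗[k] N) : ∃ (n : ℕ) (a : Fin n → M) (b : Fin n → N),
    t = ∑ i, a i ⊗ₜ[k] b i := by
  induction t using TensorProduct.induction_on with
  | zero => exact ⟨0, Fin.elim0, Fin.elim0, by simp⟩
  | tmul x y => exact ⟨1, fun _ => x, fun _ => y, by simp⟩
  | add x y hx hy =>
    obtain ⟨n, a, b, rfl⟩ := hx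
    obtain ⟨m, c, d, rfl⟩ := hy
    exact ⟨n + m, Fin.append a c, Fin.append b d, by simp [Fin.sum_univ_add]⟩

theorem exists_fin3 (t : M ⊗[k] (N ⊗[k] P)) : ∃ (n : ℕ) (a : Fin n → M) (b : Fin n → N)
    (c : Fin n → P), t = ∑ i, a i ⊗ₜ[k] (b i ⊗ₜ[k] c i) := by
  induction t using TensorProduct.induction_on with
  | zero => exact ⟨0, Fin.elim0, Fin.elim0, Fin.elim0, by simp⟩
  | tmul x y =>
    obtain ⟨n, a, b, rfl⟩ := exists_fin2 y
    exact ⟨n, fun _ => x, a, b, by simp [TensorProduct.tmul_sum]⟩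
  | add x y hx hy =>
    obtain ⟨n, a, b, e, rfl⟩ := hx
    obtain ⟨m, c, d, f, rfl⟩ := hy
    exact ⟨n + m, Fin.append a c, Fin.append b d, Fin.append e f, by simp [Fin.sum_univ_add]⟩

/-- Induction on pure tensors of three factors. -/
theorem ind3 {p : M ⊗[k] (N ⊗[k] P) → Prop} (t : M ⊗[k] (N ⊗[k] P)) (h0 : p 0)
    (h1 : ∀ a b c, p (a ⊗ₜ (b ⊗ₜ c))) (h2 : ∀ x y, p x → p y → p (x + y)) : p t := by
  obtain ⟨n, a, b, c, rfl⟩ := exists_fin3 t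
  exact Finset.sum_induction _ p h2 h0 (fun i _ => h1 _ _ _)

end reps

variable {k H B : Type*} [Field k] [Ring H] [Algebra k H] [Ring B] [Algebra k B]

noncomputable section

/-- a ⊗ b ↦ S(a) α b -/
def Al (Q : QuasiHopfAlgebra k H) : H ⊗[k] H →ₗ[k] H :=
  LinearMap.mul' k H ∘ₗ TensorProduct.map Q.S (LinearMap.mulLeft k Q.alpha)

/-- a ⊗ b ↦ a β S(b) -/
def Ar (Q : QuasiHopfAlgebra k H) : H ⊗[k] H →ₗ[k] H :=
  LinearMap.mul' k H ∘ₗ TensorProduct.map LinearMap.id (LinearMap.mulLeft k Q.beta ∘ₗ Q.S)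

@[simp] theorem Al_tmul (Q : QuasiHopfAlgebra k H) (a b : H) :
    Al Q (a ⊗ₜ b) = Q.S a * (Q.alpha * b) := by simp [Al]

@[simp] theorem Ar_tmul (Q : QuasiHopfAlgebra k H) (a b : H) :
    Ar Q (a ⊗ₜ b) = a * (Q.beta * Q.S b) := by simp [Ar]

theorem Al_comul (Q : QuasiHopfAlgebra k H) (h : H) :
    Al Q (Q.comul h) = Q.counit h • Q.alpha := by
  obtain ⟨n, a, b, e⟩ := exists_fin2 (Q.comul h)
  rw [← Q.antipode_left h n a b e, e]
  simp [mul_assoc]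

theorem Ar_comul (Q : QuasiHopfAlgebra k H) (h : H) :
    Ar Q (Q.comul h) = Q.counit h • Q.beta := by
  obtain ⟨n, a, b, e⟩ := exists_fin2 (Q.comul h)
  rw [← Q.antipode_right h n a b e, e]
  simp [mul_assoc]

theorem Al_mul (Q : QuasiHopfAlgebra k H) (d : H ⊗[k] H) (a b : H) :
    Al Q (d * (a ⊗ₜ b)) = Q.S a * (Al Q d * b) := by
  induction d using TensorProduct.induction_on with
  | zero => simp
  | tmul x y => simp [Q.S_mul, mul_assoc]
  | add x y hx hy => simp [add_mul, mul_add, hx, hy]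

theorem Ar_mul (Q : QuasiHopfAlgebra k H) (d : H ⊗[k] H) (a b : H) :
    Ar Q ((a ⊗ₜ b) * d) = a * (Ar Q d * Q.S b) := by
  induction d using TensorProduct.induction_on with
  | zero => simp
  | tmul x y => simp [Q.S_mul, mul_assoc]
  | add x y hx hy => simp [add_mul, mul_add, hx, hy]

theorem Al_comul_mul (Q : QuasiHopfAlgebra k H) (h : H) (z : H ⊗[k] H) :
    Al Q (Q.comul h * z) = Q.counit h • Al Q z := by
  induction z using TensorProduct.induction_on with
  | zero => simp
  | tmul x y => simp [Al_mul, Al_comul]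
  | add x y hx hy => simp [mul_add, hx, hy]

theorem Ar_mul_comul (Q : QuasiHopfAlgebra k H) (h : H) (z : H ⊗[k] H) :
    Ar Q (z * Q.comul h) = Q.counit h • Ar Q z := by
  induction z using TensorProduct.induction_on with
  | zero => simp
  | tmul x y => simp [Ar_mul, Ar_comul]
  | add x y hx hy => simp [add_mul, hx, hy]

/-- The evaluation a ⊗ b ⊗ c ↦ a β S(b) α c. -/
def W (Q : QuasiHopfAlgebra k H) : H ⊗[k] (H ⊗[k] H) →ₗ[k] H :=
  LinearMap.mul' k H ∘ₗ TensorProduct.map LinearMap.id (LinearMap.mulLeft k Q.beta ∘ₗ Al Q)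

@[simp] theorem W_tmul (Q : QuasiHopfAlgebra k H) (a : H) (t : H ⊗[k] H) :
    W Q (a ⊗ₜ t) = a * (Q.beta * Al Q t) := by simp [W]

theorem W_Phi (Q : QuasiHopfAlgebra k H) : W Q Q.Phi = 1 := by
  obtain ⟨n, a, b, c, e⟩ := exists_fin3 Q.Phi
  rw [← Q.antipode_Phi n a b c e, e]
  simp [mul_assoc]

theorem W_mul_comul (Q : QuasiHopfAlgebra k H) (z : H ⊗[k] (H ⊗[k] H)) (d : H ⊗[k] H) (c : H) :
    W Q (z * Algebra.TensorProduct.assoc k k k H H H (d ⊗ₜ c))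
      = W Q (z * Algebra.TensorProduct.assoc k k k H H H (d ⊗ₜ 1)) * c := by
  induction z using ind3 with
  | h0 => simp
  | h2 x y hx hy => simp [add_mul, hx, hy]
  | h1 p q r =>
    induction d using TensorProduct.induction_on with
    | zero => simp
    | tmul x y => simp [mul_assoc]
    | add x y hx hy => simp only [add_tmul, map_add, mul_add, add_mul, hx, hy]

theorem W_mul_d (Q : QuasiHopfAlgebra k H) (p q r : H) (d : H ⊗[k] H) :
    W Q ((p ⊗ₜ (q ⊗ₜ r)) * Algebra.TensorProduct.assoc k k k H H H (d ⊗ₜ 1))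
      = p * (Ar Q d * Al Q (q ⊗ₜ r)) := by
  induction d using TensorProduct.induction_on with
  | zero => simp
  | tmul x y => simp [mul_assoc, Q.S_mul]
  | add x y hx hy => simp only [add_tmul, map_add, mul_add, add_mul, hx, hy]

theorem W_mul_comul' (Q : QuasiHopfAlgebra k H) (z : H ⊗[k] (H ⊗[k] H)) (h c : H) :
    W Q (z * Algebra.TensorProduct.assoc k k k H H H (Q.comul h ⊗ₜ c))
      = Q.counit h • (W Q z * c) := by
  rw [W_mul_comul]
  induction z using ind3 with
  | h0 => simp
  | h2 x y hx hy => simp [add_mul, hx, hy]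
  | h1 p q r => rw [W_mul_d, Ar_comul]; simp [mul_assoc]

theorem W_comul_mul (Q : QuasiHopfAlgebra k H) (z : H ⊗[k] (H ⊗[k] H)) (h c : H) :
    W Q ((c ⊗ₜ Q.comul h) * z) = Q.counit h • (c * W Q z) := by
  induction z using TensorProduct.induction_on with
  | zero => simp
  | add x y hx hy => simp [mul_add, hx, hy]
  | tmul p t => simp [Al_comul_mul, mul_assoc]

/-- H as a map: h ↦ ε(h) 1 -/
def ee (Q : QuasiBialgebra k H) : H →ₐ[k] H := (Algebra.ofId k H).comp Q.counit

@[simp] theorem ee_apply (Q : QuasiBialgebra k H) (h : H) :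
    ee Q h = Q.counit h • (1 : H) := by simp [ee, Algebra.ofId_apply, Algebra.algebraMap_eq_smul_one]

/-- ε ⊗ id : H ⊗ H → H -/
def el (Q : QuasiBialgebra k H) (A : Type*) [Ring A] [Algebra k A] : H ⊗[k] A →ₐ[k] A :=
  (Algebra.TensorProduct.lid k A).toAlgHom.comp
    (Algebra.TensorProduct.map Q.counit (AlgHom.id k A))

@[simp] theorem el_tmul (Q : QuasiBialgebra k H) (A : Type*) [Ring A] [Algebra k A] (h : H)
    (a : A) : el Q A (h ⊗ₜ a) = Q.counit h • a := by simp [el]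

theorem el_comul (Q : QuasiBialgebra k H) (h : H) : el Q H (Q.comul h) = h := by
  simp [el, Q.counit_comul_left]

/-- id ⊗ ε : A ⊗ H → A -/
def er (Q : QuasiBialgebra k H) (A : Type*) [Ring A] [Algebra k A] : A ⊗[k] H →ₐ[k] A :=
  (Algebra.TensorProduct.rid k k A).toAlgHom.comp
    (Algebra.TensorProduct.map (AlgHom.id k A) Q.counit)

@[simp] theorem er_tmul (Q : QuasiBialgebra k H) (A : Type*) [Ring A] [Algebra k A] (h : H)
    (a : A) : er Q A (a ⊗ₜ h) = Q.counit h • a := by simp [er]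

theorem er_comul (Q : QuasiBialgebra k H) (h : H) : er Q H (Q.comul h) = h := by
  simp [er, Q.counit_comul_right]

theorem el_mid (Q : QuasiBialgebra k H) :
    Algebra.TensorProduct.map (AlgHom.id k H) (el Q H) Q.Phi = 1 := by
  have := congrArg (Algebra.TensorProduct.map (AlgHom.id k H)
    (Algebra.TensorProduct.lid k H).toAlgHom) Q.counit_Phi
  rw [map_one] at this
  rw [← this]
  generalize Q.Phi = w
  induction w using ind3 with
  | h0 => simp
  | h2 x y hx hy => simp only [map_add, hx, hy]
  | h1 p q r => simp

theorem phi_cancel (Q : QuasiBialgebra k H) {u : H ⊗[k] (H ⊗[k] H)} (h : Q.Phi * u = Q.Phi) :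
    u = 1 := by
  have := congrArg (Q.PhiInv * ·) h
  simpa [← mul_assoc, Q.inv_mul_Phi] using this

theorem phi_cancel' (Q : QuasiBialgebra k H) {u : H ⊗[k] (H ⊗[k] H)} (h : u * Q.Phi = Q.Phi) :
    u = 1 := by
  have := congrArg (· * Q.PhiInv) h
  simpa [mul_assoc, Q.Phi_mul_inv] using this

theorem inv_of_one {A : Type*} [Ring A] [Algebra k A] (Q : QuasiBialgebra k H)
    (f : H ⊗[k] (H ⊗[k] H) →ₐ[k] A) (h : f Q.Phi = 1) : f Q.PhiInv = 1 := by
  have := congrArg f Q.Phi_mul_inv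
  simpa [h] using this

theorem e3_Phi (Q : QuasiBialgebra k H) :
    Algebra.TensorProduct.map (AlgHom.id k H)
      (Algebra.TensorProduct.map (AlgHom.id k H) (ee Q)) Q.Phi = 1 := by
  have h := congrArg (Algebra.TensorProduct.map (AlgHom.id k H)
    (Algebra.TensorProduct.map (AlgHom.id k H) (el Q H))) Q.pentagon
  simp only [map_mul] at h
  apply phi_cancel Q
  have h1 : Algebra.TensorProduct.map (AlgHom.id k H)
    (Algebra.TensorProduct.map (AlgHom.id k H) (el Q H)) ((1 : H) ⊗ₜ[k] Q.Phi) = 1 := by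
    rw [Algebra.TensorProduct.map_tmul, el_mid]; rfl
  have h2 : ∀ w, Algebra.TensorProduct.map (AlgHom.id k H)
      (Algebra.TensorProduct.map (AlgHom.id k H) (el Q H))
      ((Algebra.TensorProduct.map (AlgHom.id k H)
          (((Algebra.TensorProduct.assoc k k k H H H).toAlgHom).comp
            (Algebra.TensorProduct.map Q.comul (AlgHom.id k H)))) w) = w := by
    intro w
    induction w using ind3 with
    | h0 => simp
    | h2 x y hx hy => simp only [map_add, hx, hy]
    | h1 p q r =>
      have : ∀ d : H ⊗[k] H, Algebra.TensorProduct.map (AlgHom.id k H) (el Q H)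
          (Algebra.TensorProduct.assoc k k k H H H (d ⊗ₜ r)) = er Q H d ⊗ₜ r := by
        intro d
        induction d using TensorProduct.induction_on with
        | zero => simp
        | tmul x y => simp [TensorProduct.smul_tmul]
        | add x y hx hy => simp only [add_tmul, map_add, hx, hy]
      have h' := this (Q.comul q)
      rw [er_comul] at h'
      simp [h']
  have h3 : ∀ w, Algebra.TensorProduct.map (AlgHom.id k H)
      (Algebra.TensorProduct.map (AlgHom.id k H) (el Q H))
      ((Algebra.TensorProduct.map (AlgHom.id k H)
          (Algebra.TensorProduct.map (AlgHom.id k H)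
            (Algebra.TensorProduct.includeLeft : H →ₐ[k] H ⊗[k] H))) w)
      = Algebra.TensorProduct.map (AlgHom.id k H)
      (Algebra.TensorProduct.map (AlgHom.id k H) (ee Q)) w := by
    intro w
    induction w using ind3 with
    | h0 => simp
    | h2 x y hx hy => simp only [map_add, hx, hy]
    | h1 p q r => simp
  have h4 : ∀ w, Algebra.TensorProduct.map (AlgHom.id k H)
      (Algebra.TensorProduct.map (AlgHom.id k H) (el Q H))
      ((Algebra.TensorProduct.map (AlgHom.id k H)
          (Algebra.TensorProduct.map (AlgHom.id k H) Q.comul)) w) = w := by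
    intro w
    induction w using ind3 with
    | h0 => simp
    | h2 x y hx hy => simp only [map_add, hx, hy]
    | h1 p q r => simp [el_comul]
  have h5 : ∀ w, Algebra.TensorProduct.map (AlgHom.id k H)
      (Algebra.TensorProduct.map (AlgHom.id k H) (el Q H))
      ((Algebra.TensorProduct.assoc k k k H H (H ⊗[k] H))
          ((Algebra.TensorProduct.map Q.comul (AlgHom.id k (H ⊗[k] H))) w))
      = Algebra.TensorProduct.assoc k k k H H H (Algebra.TensorProduct.map Q.comul (AlgHom.id k H)
        (Algebra.TensorProduct.map (AlgHom.id k H) (el Q H) w)) := by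
    intro w
    induction w using TensorProduct.induction_on with
    | zero => simp
    | add x y hx hy => simp only [map_add, hx, hy]
    | tmul p q =>
      simp only [Algebra.TensorProduct.map_tmul, AlgHom.coe_id, id_eq]
      generalize Q.comul p = d
      induction d using TensorProduct.induction_on with
      | zero => simp
      | tmul x y => simp
      | add x y hx hy => simp only [add_tmul, map_add, hx, hy]
  rw [h1, h2, h3, h4, h5, el_mid] at h
  simpa using h

theorem e1_Phi (Q : QuasiBialgebra k H) : el Q (H ⊗[k] H) Q.Phi = 1 := by
  have h := congrArg (Algebra.TensorProduct.map (AlgHom.id k H) (el Q (H ⊗[k] H))) Q.pentagon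
  simp only [map_mul] at h
  have h2 : ∀ w, Algebra.TensorProduct.map (AlgHom.id k H) (el Q (H ⊗[k] H))
      ((Algebra.TensorProduct.map (AlgHom.id k H)
          (((Algebra.TensorProduct.assoc k k k H H H).toAlgHom).comp
            (Algebra.TensorProduct.map Q.comul (AlgHom.id k H)))) w) = w := by
    intro w
    induction w using ind3 with
    | h0 => simp
    | h2 x y hx hy => simp only [map_add, hx, hy]
    | h1 p q r =>
      have : ∀ d : H ⊗[k] H, el Q (H ⊗[k] H)
          (Algebra.TensorProduct.assoc k k k H H H (d ⊗ₜ r)) = el Q H d ⊗ₜ r := by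
        intro d
        induction d using TensorProduct.induction_on with
        | zero => simp
        | tmul x y => simp [TensorProduct.smul_tmul']
        | add x y hx hy => simp only [add_tmul, map_add, hx, hy]
      have h' := this (Q.comul q)
      rw [el_comul] at h'
      simp [h']
  have h3 : ∀ w, Algebra.TensorProduct.map (AlgHom.id k H) (el Q (H ⊗[k] H))
      ((Algebra.TensorProduct.map (AlgHom.id k H)
          (Algebra.TensorProduct.map (AlgHom.id k H)
            (Algebra.TensorProduct.includeLeft : H →ₐ[k] H ⊗[k] H))) w)
      = Algebra.TensorProduct.map (AlgHom.id k H) Algebra.TensorProduct.includeLeft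
      (Algebra.TensorProduct.map (AlgHom.id k H) (el Q H) w) := by
    intro w
    induction w using ind3 with
    | h0 => simp
    | h2 x y hx hy => simp only [map_add, hx, hy]
    | h1 p q r => simp
  have h4 : ∀ w, Algebra.TensorProduct.map (AlgHom.id k H) (el Q (H ⊗[k] H))
      ((Algebra.TensorProduct.map (AlgHom.id k H)
          (Algebra.TensorProduct.map (AlgHom.id k H) Q.comul)) w)
      = Algebra.TensorProduct.map (AlgHom.id k H) Q.comul
      (Algebra.TensorProduct.map (AlgHom.id k H) (el Q H) w) := by
    intro w
    induction w using ind3 with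
    | h0 => simp
    | h2 x y hx hy => simp only [map_add, hx, hy]
    | h1 p q r => simp
  have h5 : ∀ w, Algebra.TensorProduct.map (AlgHom.id k H) (el Q (H ⊗[k] H))
      ((Algebra.TensorProduct.assoc k k k H H (H ⊗[k] H))
          ((Algebra.TensorProduct.map Q.comul (AlgHom.id k (H ⊗[k] H))) w)) = w := by
    intro w
    induction w using TensorProduct.induction_on with
    | zero => simp
    | add x y hx hy => simp only [map_add, hx, hy]
    | tmul p q =>
      simp only [Algebra.TensorProduct.map_tmul, AlgHom.coe_id, id_eq]
      have : ∀ d : H ⊗[k] H, Algebra.TensorProduct.map (AlgHom.id k H) (el Q (H ⊗[k] H))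
          (Algebra.TensorProduct.assoc k k k H H (H ⊗[k] H) (d ⊗ₜ q)) = er Q H d ⊗ₜ q := by
        intro d
        induction d using TensorProduct.induction_on with
        | zero => simp
        | tmul x y => simp [TensorProduct.smul_tmul]
        | add x y hx hy => simp only [add_tmul, map_add, hx, hy]
      rw [this, er_comul]
  rw [h2, h3, h4, h5, el_mid, map_one, map_one, mul_one, one_mul] at h
  have h6 := phi_cancel' Q h
  have h7 := congrArg (el Q (H ⊗[k] H)) h6
  simpa using h7

/-- The map p ⊗ q ⊗ r ⊗ s ↦ p ⊗ q β S(r) α s -/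
def NN (Q : QuasiHopfAlgebra k H) : H ⊗[k] (H ⊗[k] (H ⊗[k] H)) →ₗ[k] H ⊗[k] H :=
  TensorProduct.map LinearMap.id (W Q)

@[simp] theorem NN_tmul (Q : QuasiHopfAlgebra k H) (p : H) (t : H ⊗[k] (H ⊗[k] H)) :
    NN Q (p ⊗ₜ t) = p ⊗ₜ W Q t := by simp [NN]

theorem pentagon' (Q : QuasiBialgebra k H) :
    (Algebra.TensorProduct.assoc k k k H H (H ⊗[k] H))
          ((Algebra.TensorProduct.map Q.comul (AlgHom.id k (H ⊗[k] H))) Q.Phi)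
      * (Algebra.TensorProduct.map (AlgHom.id k H)
          (Algebra.TensorProduct.map (AlgHom.id k H)
            (Algebra.TensorProduct.includeLeft : H →ₐ[k] H ⊗[k] H))) Q.PhiInv
    = (Algebra.TensorProduct.map (AlgHom.id k H)
          (Algebra.TensorProduct.map (AlgHom.id k H) Q.comul)) Q.PhiInv
      * (((1 : H) ⊗ₜ[k] Q.Phi)
      * (Algebra.TensorProduct.map (AlgHom.id k H)
          (((Algebra.TensorProduct.assoc k k k H H H).toAlgHom).comp
            (Algebra.TensorProduct.map Q.comul (AlgHom.id k H)))) Q.Phi) := by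
  have h := congrArg (fun z => (Algebra.TensorProduct.map (AlgHom.id k H)
          (Algebra.TensorProduct.map (AlgHom.id k H) Q.comul)) Q.PhiInv * z *
      (Algebra.TensorProduct.map (AlgHom.id k H)
          (Algebra.TensorProduct.map (AlgHom.id k H)
            (Algebra.TensorProduct.includeLeft : H →ₐ[k] H ⊗[k] H))) Q.PhiInv) Q.pentagon
  beta_reduce at h
  rw [← mul_assoc _ _ ((Algebra.TensorProduct.assoc k k k H H (H ⊗[k] H)) _), ← map_mul,
    Q.inv_mul_Phi, map_one, one_mul, mul_assoc, mul_assoc, ← map_mul, Q.Phi_mul_inv, map_one,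
    mul_one] at h
  exact h.symm

theorem NN_left (Q : QuasiHopfAlgebra k H) (w : H ⊗[k] (H ⊗[k] H))
    (z : H ⊗[k] (H ⊗[k] (H ⊗[k] H))) :
    NN Q ((Algebra.TensorProduct.map (AlgHom.id k H)
          (Algebra.TensorProduct.map (AlgHom.id k H) Q.comul)) w * z)
    = (TensorProduct.map LinearMap.id (LinearMap.mul' k H))
      ((Algebra.TensorProduct.map (AlgHom.id k H)
      (Algebra.TensorProduct.map (AlgHom.id k H) (ee Q.toQuasiBialgebra))) w) * NN Q z := by
  induction w using ind3 with
  | h0 => simp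
  | h2 x y hx hy => simp only [map_add, add_mul, hx, hy]
  | h1 p q r =>
    induction z using TensorProduct.induction_on with
    | zero => simp
    | add x y hx hy => simp only [map_add, mul_add, hx, hy]
    | tmul x y => simp [W_comul_mul]

theorem madd {A : Type*} [Ring A] [Algebra k A] (z x y : H ⊗[k] A) :
    z * (x + y) = z * x + z * y := mul_add z x y

theorem addm {A : Type*} [Ring A] [Algebra k A] (x y z : H ⊗[k] A) :
    (x + y) * z = x * z + y * z := add_mul x y z

theorem NN_right_aux (Q : QuasiHopfAlgebra k H)
    (f : H ⊗[k] (H ⊗[k] H) →ₐ[k] H ⊗[k] (H ⊗[k] (H ⊗[k] H)))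
    (hf : ∀ p q r, f (p ⊗ₜ (q ⊗ₜ r)) =
      p ⊗ₜ Algebra.TensorProduct.assoc k k k H H H (Q.comul q ⊗ₜ r))
    (w : H ⊗[k] (H ⊗[k] H)) (z : H ⊗[k] (H ⊗[k] (H ⊗[k] H))) :
    NN Q (z * f w)
    = NN Q z * (Algebra.TensorProduct.map (AlgHom.id k H) (el Q.toQuasiBialgebra H) w) := by
  induction w using ind3 with
  | h0 =>
    have e : z * f 0 = 0 := by rw [map_zero]; exact mul_zero z
    rw [e]; simp
  | h2 x y hx hy =>
    have e : z * f (x + y) = z * f x + z * f y := by rw [map_add]; exact madd _ _ _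
    rw [e]; simp only [map_add, mul_add, hx, hy]
  | h1 p q r =>
    rw [hf]
    induction z using TensorProduct.induction_on with
    | zero =>
      generalize p ⊗ₜ[k] Algebra.TensorProduct.assoc k k k H H H (Q.comul q ⊗ₜ r) = y
      have e : (0 : H ⊗[k] (H ⊗[k] (H ⊗[k] H))) * y = 0 := zero_mul y
      rw [e]; simp
    | add x y hx hy =>
      revert hx hy
      generalize p ⊗ₜ[k] Algebra.TensorProduct.assoc k k k H H H (Q.comul q ⊗ₜ r) = s
      intro hx hy
      have e : (x + y) * s = x * s + y * s := addm x y s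
      rw [e]; simp only [map_add, add_mul, hx, hy]
    | tmul x y =>
      have := W_mul_comul' Q y q r
      simp [this]

theorem NN_right (Q : QuasiHopfAlgebra k H) (w : H ⊗[k] (H ⊗[k] H))
    (z : H ⊗[k] (H ⊗[k] (H ⊗[k] H))) :
    NN Q (z * (Algebra.TensorProduct.map (AlgHom.id k H)
          (((Algebra.TensorProduct.assoc k k k H H H).toAlgHom).comp
            (Algebra.TensorProduct.map Q.comul (AlgHom.id k H)))) w)
    = NN Q z * (Algebra.TensorProduct.map (AlgHom.id k H) (el Q.toQuasiBialgebra H) w) :=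
  NN_right_aux Q _ (fun p q r => by simp) w z

theorem qp (Q : QuasiHopfAlgebra k H) :
    NN Q ((Algebra.TensorProduct.assoc k k k H H (H ⊗[k] H))
          ((Algebra.TensorProduct.map Q.comul (AlgHom.id k (H ⊗[k] H))) Q.Phi)
      * (Algebra.TensorProduct.map (AlgHom.id k H)
          (Algebra.TensorProduct.map (AlgHom.id k H)
            (Algebra.TensorProduct.includeLeft : H →ₐ[k] H ⊗[k] H))) Q.PhiInv) = 1 := by
  rw [pentagon', NN_left, NN_right, el_mid, inv_of_one _ _ (e3_Phi _), NN_tmul, W_Phi]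
  simp [Algebra.TensorProduct.one_def]

/-! ### The comodule algebra side -/

theorem phiInv_eq {Q : QuasiBialgebra k H} (R : RightComoduleAlgebra Q B) (v : H →ₐ[k] B)
    (hv : IsComodAlgMorphismFromH R v) :
    R.PhiRhoInv = Algebra.TensorProduct.map v (AlgHom.id k (H ⊗[k] H)) Q.PhiInv := by
  have h : R.PhiRho * Algebra.TensorProduct.map v (AlgHom.id k (H ⊗[k] H)) Q.PhiInv = 1 := by
    rw [hv.2, ← map_mul, Q.Phi_mul_inv, map_one]
  exact left_inv_eq_right_inv R.inv_mul_PhiRho h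

theorem coassoc' {Q : QuasiBialgebra k H} (R : RightComoduleAlgebra Q B) (b : B) :
    R.PhiRhoInv * (Algebra.TensorProduct.map (AlgHom.id k B) Q.comul) (R.coact b)
    = (Algebra.TensorProduct.assoc k k k B H H)
        ((Algebra.TensorProduct.map R.coact (AlgHom.id k H)) (R.coact b)) * R.PhiRhoInv := by
  have h := congrArg (fun z => R.PhiRhoInv * z * R.PhiRhoInv) (R.coact_coassoc b)
  beta_reduce at h
  rw [← mul_assoc, R.inv_mul_PhiRho, one_mul, mul_assoc, mul_assoc, R.PhiRho_mul_inv,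
    mul_one] at h
  exact h.symm

theorem er_coact {Q : QuasiBialgebra k H} (R : RightComoduleAlgebra Q B) (b : B) :
    er Q B (R.coact b) = b := by
  simp [er, R.counit_coact]

/-- b ⊗ h ⊗ g ↦ b v(β S(h) α g) -/
def VV (Q : QuasiHopfAlgebra k H) (v : H →ₐ[k] B) : B ⊗[k] (H ⊗[k] H) →ₗ[k] B :=
  LinearMap.mul' k B ∘ₗ TensorProduct.map LinearMap.id
    (v.toLinearMap ∘ₗ LinearMap.mulLeft k Q.beta ∘ₗ Al Q)

@[simp] theorem VV_tmul (Q : QuasiHopfAlgebra k H) (v : H →ₐ[k] B) (b : B) (t : H ⊗[k] H) :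
    VV Q v (b ⊗ₜ t) = b * (v Q.beta * v (Al Q t)) := by simp [VV]

/-- The inclusion of B ⊗ H as the first two factors. -/
def inc (B H : Type*) [Ring H] [Algebra k H] [Ring B] [Algebra k B] :
    B ⊗[k] H →ₐ[k] B ⊗[k] (H ⊗[k] H) :=
  Algebra.TensorProduct.map (AlgHom.id k B) Algebra.TensorProduct.includeLeft

@[simp] theorem inc_tmul (b : B) (h : H) :
    inc (k := k) B H (b ⊗ₜ h) = b ⊗ₜ (h ⊗ₜ 1) := by simp [inc]

theorem E_eq (Q : QuasiHopfAlgebra k H) (R : RightComoduleAlgebra Q.toQuasiBialgebra B)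
    (v : H →ₐ[k] B) (hv : IsComodAlgMorphismFromH R v)
    (E : B →ₗ[k] B) (hE : IsCanonicalProjection Q R v E) (b : B) :
    E b = VV Q v (R.PhiRho * inc B H (R.coact b)) := by
  obtain ⟨n, X1, X2, X3, e⟩ := exists_fin3 Q.Phi
  obtain ⟨p, b0, b1, e'⟩ := exists_fin2 (R.coact b)
  rw [hE b n X1 X2 X3 e p b0 b1 e', hv.2, e, e']
  simp [Finset.sum_mul, Finset.mul_sum, Q.S_mul, Q.S_Sinv, mul_assoc]
  try rw [Finset.sum_comm]

theorem VV_comul (Q : QuasiHopfAlgebra k H) (v : H →ₐ[k] B) (t : B ⊗[k] H)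
    (z : B ⊗[k] (H ⊗[k] H)) :
    VV Q v ((Algebra.TensorProduct.map (AlgHom.id k B) Q.comul) t * z)
      = er Q.toQuasiBialgebra B t * VV Q v z := by
  induction t using TensorProduct.induction_on with
  | zero => simp
  | add x y hx hy => simp only [map_add, add_mul, hx, hy]
  | tmul x y =>
    induction z using TensorProduct.induction_on with
    | zero => simp
    | add x y hx hy => simp only [map_add, mul_add, hx, hy]
    | tmul p q => simp [Al_comul_mul, mul_assoc]

theorem VV_inc (Q : QuasiHopfAlgebra k H) (v : H →ₐ[k] B) (h : H)
    (z : B ⊗[k] (H ⊗[k] H)) :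
    VV Q v (z * inc B H (Algebra.TensorProduct.map v (AlgHom.id k H) (Q.comul h)))
      = Q.counit h • VV Q v z := by
  induction z using ind3 with
  | h0 => simp
  | h2 x y hx hy => simp only [map_add, add_mul, smul_add, hx, hy]
  | h1 p q r =>
    have : ∀ d : H ⊗[k] H, VV Q v ((p ⊗ₜ (q ⊗ₜ r)) *
        inc B H (Algebra.TensorProduct.map v (AlgHom.id k H) d))
        = p * (v (Ar Q d) * v (Al Q (q ⊗ₜ r))) := by
      intro d
      induction d using TensorProduct.induction_on with
      | zero => simp
      | tmul x y => simp [Q.S_mul, mul_assoc]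
      | add x y hx hy => simp only [map_add, add_mul, mul_add, hx, hy]
    rw [this, Ar_comul]
    simp

section E
variable (Q : QuasiHopfAlgebra k H) (R : RightComoduleAlgebra Q.toQuasiBialgebra B)
    (v : H →ₐ[k] B)

/-- b ⊗ h ↦ F(b c) (ρ v)(h) -/
def mulMap {A : Type*} [Ring A] [Algebra k A] (F : B →ₗ[k] A) (u : H →ₐ[k] A) (c : B) :
    B ⊗[k] H →ₗ[k] A :=
  LinearMap.mul' k A ∘ₗ TensorProduct.map (F ∘ₗ LinearMap.mulRight k c) u.toLinearMap

@[simp] theorem mulMap_tmul {A : Type*} [Ring A] [Algebra k A] (F : B →ₗ[k] A) (u : H →ₐ[k] A)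
    (c : B) (b : B) (h : H) : mulMap F u c (b ⊗ₜ h) = F (b * c) * u h := by simp [mulMap]

theorem VV_mul_right (g : H) (z : B ⊗[k] (H ⊗[k] H)) :
    VV Q v (z * (1 ⊗ₜ (1 ⊗ₜ g))) = VV Q v z * v g := by
  induction z using ind3 with
  | h0 => simp
  | h2 x y hx hy => simp only [map_add, add_mul, hx, hy]
  | h1 p q r => simp [mul_assoc]

theorem E_mul_v (hv : IsComodAlgMorphismFromH R v) (E : B →ₗ[k] B)
    (hE : IsCanonicalProjection Q R v E) (b : B) (h : H) : E (b * v h) = Q.counit h • E b := by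
  rw [E_eq Q R v hv E hE, E_eq Q R v hv E hE, map_mul R.coact, map_mul (inc B H), hv.1, ← mul_assoc, VV_inc]

theorem E_one (hv : IsComodAlgMorphismFromH R v) (E : B →ₗ[k] B)
    (hE : IsCanonicalProjection Q R v E) : E 1 = 1 := by
  obtain ⟨n, X1, X2, X3, e⟩ := exists_fin3 Q.Phi
  rw [E_eq Q R v hv E hE, map_one, map_one, mul_one, hv.2, ← map_one v, ← W_Phi Q]
  generalize Q.Phi = w
  induction w using ind3 with
  | h0 => simp
  | h2 x y hx hy => simp only [map_add, hx, hy]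
  | h1 p q r => simp

theorem E_L1 (hv : IsComodAlgMorphismFromH R v) (E : B →ₗ[k] B)
    (hE : IsCanonicalProjection Q R v E) (c b : B) : mulMap E v b (R.coact c) = c * E b := by
  have h : ∀ t : B ⊗[k] H, mulMap E v b t = VV Q v (R.PhiRho *
      (Algebra.TensorProduct.assoc k k k B H H)
        ((Algebra.TensorProduct.map R.coact (AlgHom.id k H)) t) * inc B H (R.coact b)) := by
    intro t
    induction t using TensorProduct.induction_on with
    | zero => simp
    | add x y hx hy => simp only [map_add, add_mul, mul_add, hx, hy]
    | tmul x y =>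
      rw [mulMap_tmul, E_eq Q R v hv E hE, ← VV_mul_right, map_mul R.coact, map_mul (inc B H), mul_assoc, mul_assoc,
        mul_assoc]
      congr 2
      simp only [Algebra.TensorProduct.map_tmul, AlgHom.coe_id, id_eq]
      generalize R.coact x = s
      generalize R.coact b = t
      induction s using TensorProduct.induction_on with
      | zero => simp
      | add x y hx hy => simp only [map_add, add_mul, add_tmul, hx, hy]
      | tmul p q =>
        induction t using TensorProduct.induction_on with
        | zero => simp
        | add x y hx hy => simp only [map_add, mul_add, add_mul, hx, hy]
        | tmul r s => simp
  rw [h, R.coact_coassoc, mul_assoc, VV_comul, er_coact, ← E_eq Q R v hv E hE]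

theorem E_mulMap (hv : IsComodAlgMorphismFromH R v) (E : B →ₗ[k] B)
    (hE : IsCanonicalProjection Q R v E) (b : B) (t : B ⊗[k] H) :
    E (mulMap E v b t) = E (E (er Q.toQuasiBialgebra B t * b)) := by
  induction t using TensorProduct.induction_on with
  | zero => simp
  | add x y hx hy => simp only [map_add, add_mul, hx, hy]
  | tmul x y => simp [E_mul_v Q R v hv E hE]

theorem E_mul_E' (hv : IsComodAlgMorphismFromH R v) (E : B →ₗ[k] B)
    (hE : IsCanonicalProjection Q R v E) (c b : B) : E (c * E b) = E (E (c * b)) := by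
  rw [← E_L1 Q R v hv E hE, E_mulMap Q R v hv E hE, er_coact]

theorem E_E (hv : IsComodAlgMorphismFromH R v) (E : B →ₗ[k] B)
    (hE : IsCanonicalProjection Q R v E) (b : B) : E (E b) = E b := by
  have := E_mul_E' Q R v hv E hE b 1
  rw [E_one Q R v hv E hE, mul_one] at this
  exact this.symm

theorem E_mul_E (hv : IsComodAlgMorphismFromH R v) (E : B →ₗ[k] B)
    (hE : IsCanonicalProjection Q R v E) (c b : B) : E (c * E b) = E (c * b) := by
  rw [E_mul_E' Q R v hv E hE, E_E Q R v hv E hE]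

/-- The vanishing lemma. -/
theorem vanish (hv : IsComodAlgMorphismFromH R v) (F : B →ₗ[k] B ⊗[k] H) (h1 : F 1 = 0)
    (h2 : ∀ b h, F (b * v h) = Q.counit h • F b)
    (h3 : ∀ c b, mulMap F (R.coact.comp v) b (R.coact c) = R.coact c * F b) (b : B) :
    F b = 0 := by
  set u : H →ₐ[k] B ⊗[k] H := R.coact.comp v with hu
  have h4 : ∀ c, mulMap F u 1 (R.coact c) = 0 := fun c => by rw [h3, h1, mul_zero]
  let L : B ⊗[k] (H ⊗[k] H) →ₗ[k] B ⊗[k] H :=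
    LinearMap.mul' k _ ∘ₗ TensorProduct.map F (u.toLinearMap ∘ₗ Ar Q)
  have hL : ∀ c t, L (c ⊗ₜ t) = F c * u (Ar Q t) := fun c t => by simp [L]
  have hL1 : ∀ z t, L (z * Algebra.TensorProduct.map (AlgHom.id k B) Q.comul t)
      = L (z * (er Q.toQuasiBialgebra B t ⊗ₜ 1)) := by
    intro z t
    induction z using TensorProduct.induction_on with
    | zero => simp
    | add x y hx hy => simp only [map_add, add_mul, hx, hy]
    | tmul p q =>
      induction t using TensorProduct.induction_on with
      | zero => simp
      | add x y hx hy => simp only [map_add, mul_add, add_tmul, hx, hy]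
      | tmul r s => simp [hL, Ar_mul_comul]
  have hL2 : ∀ t w, L ((Algebra.TensorProduct.assoc k k k B H H)
        ((Algebra.TensorProduct.map R.coact (AlgHom.id k H)) t) *
        Algebra.TensorProduct.map v (AlgHom.id k (H ⊗[k] H)) w) = 0 := by
    intro t w
    induction t using TensorProduct.induction_on with
    | zero => simp
    | add x y hx hy => simp only [map_add, add_mul, hx, hy, add_zero]
    | tmul c g =>
      induction w using ind3 with
      | h0 => simp
      | h2 x y hx hy => simp only [map_add, mul_add, hx, hy, add_zero]
      | h1 p q r =>
        have : ∀ s : B ⊗[k] H, L ((Algebra.TensorProduct.assoc k k k B H H) (s ⊗ₜ g) *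
            (v p ⊗ₜ (q ⊗ₜ r))) = Q.counit p • (mulMap F u 1 s * u (Ar Q (q ⊗ₜ (g * r)))) := by
          intro s
          induction s using TensorProduct.induction_on with
          | zero => simp
          | add x y hx hy => simp only [map_add, add_mul, add_tmul, smul_add, hx, hy]
          | tmul x y => simp [hL, h2, mul_assoc]
        have h' := this (R.coact c)
        rw [h4] at h'
        simpa using h'
  have hL3 : ∀ b, L (R.PhiRhoInv * (b ⊗ₜ 1)) = 0 := by
    intro b
    have := hL1 R.PhiRhoInv (R.coact b)
    rw [er_coact] at this
    rw [← this, coassoc', phiInv_eq R v hv, hL2]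
  -- the final evaluation
  have hM : ∀ (w z : H ⊗[k] (H ⊗[k] H)),
      L (Algebra.TensorProduct.map v (AlgHom.id k (H ⊗[k] H)) z * (b ⊗ₜ 1)) = 0 →
      mulMap F u b (Algebra.TensorProduct.map v (AlgHom.id k H)
      (NN Q ((Algebra.TensorProduct.assoc k k k H H (H ⊗[k] H))
          ((Algebra.TensorProduct.map Q.comul (AlgHom.id k (H ⊗[k] H))) w)
      * (Algebra.TensorProduct.map (AlgHom.id k H)
          (Algebra.TensorProduct.map (AlgHom.id k H)
            (Algebra.TensorProduct.includeLeft : H →ₐ[k] H ⊗[k] H))) z))) = 0 := by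
    intro w z hz
    induction w using ind3 with
    | h0 => simp
    | h2 x y hx hy => simp only [map_add, add_mul, hx, hy, add_zero]
    | h1 p q r =>
      have h5 : mulMap F u b (Algebra.TensorProduct.map v (AlgHom.id k H)
          (NN Q ((Algebra.TensorProduct.assoc k k k H H (H ⊗[k] H))
          (Q.comul p ⊗ₜ (q ⊗ₜ r))
          * (Algebra.TensorProduct.map (AlgHom.id k H)
          (Algebra.TensorProduct.map (AlgHom.id k H)
            (Algebra.TensorProduct.includeLeft : H →ₐ[k] H ⊗[k] H))) z)))
          = R.coact (v p) *
            L (Algebra.TensorProduct.map v (AlgHom.id k (H ⊗[k] H)) z * (b ⊗ₜ 1)) *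
            u (Al Q (q ⊗ₜ r)) := by
        clear hz
        induction z using ind3 with
        | h0 => simp
        | h2 x y hx hy => simp only [map_add, add_mul, mul_add, hx, hy]
        | h1 x y z =>
          have h6 : ∀ d : H ⊗[k] H, mulMap F u b (Algebra.TensorProduct.map v (AlgHom.id k H)
              (NN Q ((Algebra.TensorProduct.assoc k k k H H (H ⊗[k] H))
              (d ⊗ₜ (q ⊗ₜ r)) * (x ⊗ₜ (y ⊗ₜ (z ⊗ₜ 1))))))
              = mulMap F u (v x * b) (Algebra.TensorProduct.map v (AlgHom.id k H) d)
                * u (Ar Q (y ⊗ₜ z) * Al Q (q ⊗ₜ r)) := by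
            intro d
            induction d using TensorProduct.induction_on with
            | zero => simp
            | add x y hx hy => simp only [map_add, add_mul, add_tmul, hx, hy]
            | tmul e f => simp [mul_assoc, Q.S_mul]
          have h7 := h6 (Q.comul p)
          rw [← hv.1, h3] at h7
          simp only [Algebra.TensorProduct.map_tmul, AlgHom.coe_id, id_eq,
            Algebra.TensorProduct.includeLeft_apply, Algebra.TensorProduct.tmul_mul_tmul, mul_one,
            hL]
          rw [h7, map_mul u]
          simp only [mul_assoc]
      simp only [Algebra.TensorProduct.map_tmul, AlgHom.coe_id, id_eq]
      rw [h5, hz]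
      simp
  have h8 := hM Q.Phi Q.PhiInv (by rw [← phiInv_eq R v hv]; exact hL3 b)
  rw [qp, map_one, Algebra.TensorProduct.one_def, mulMap_tmul] at h8
  simpa using h8

/-- c ⊗ x ⊗ y ↦ E(c) v(x) ⊗ y -/
def Theta (E : B →ₗ[k] B) : B ⊗[k] (H ⊗[k] H) →ₗ[k] B ⊗[k] H :=
  TensorProduct.map (mulMap E v 1) LinearMap.id ∘ₗ
    (TensorProduct.assoc k B H H).symm.toLinearMap

theorem Theta_tmul (E : B →ₗ[k] B) (c : B) (x y : H) :
    Theta v E (c ⊗ₜ (x ⊗ₜ y)) = (E c * v x) ⊗ₜ[k] y := by simp [Theta]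

theorem Theta_mul (E : B →ₗ[k] B) (z : B ⊗[k] (H ⊗[k] H)) (b : B) (d : H ⊗[k] H) :
    Theta v E (z * (b ⊗ₜ d))
      = Theta v E (z * (b ⊗ₜ 1)) * Algebra.TensorProduct.map v (AlgHom.id k H) d := by
  induction z using ind3 with
  | h0 => simp
  | h2 x y hx hy => simp only [map_add, add_mul, hx, hy]
  | h1 p q r =>
    induction d using TensorProduct.induction_on with
    | zero => simp
    | add x y hx hy => simp only [map_add, mul_add, tmul_add, hx, hy]
    | tmul x y => simp [Theta_tmul, mul_assoc]

theorem Theta_left (hv : IsComodAlgMorphismFromH R v) (E : B →ₗ[k] B)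
    (hE : IsCanonicalProjection Q R v E) (t : B ⊗[k] H) (z : B ⊗[k] (H ⊗[k] H)) :
    Theta v E ((Algebra.TensorProduct.assoc k k k B H H)
        ((Algebra.TensorProduct.map R.coact (AlgHom.id k H)) t) * z) = t * Theta v E z := by
  induction z using ind3 with
  | h0 => simp
  | h2 x y hx hy => simp only [map_add, mul_add, hx, hy]
  | h1 p q r =>
    induction t using TensorProduct.induction_on with
    | zero => simp
    | add x y hx hy => simp only [map_add, add_mul, hx, hy]
    | tmul c g =>
      have h6 : ∀ s : B ⊗[k] H, Theta v E ((Algebra.TensorProduct.assoc k k k B H H)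
          (s ⊗ₜ g) * (p ⊗ₜ (q ⊗ₜ r))) = (mulMap E v p s * v q) ⊗ₜ (g * r) := by
        intro s
        induction s using TensorProduct.induction_on with
        | zero => simp
        | add x y hx hy => simp only [map_add, add_mul, add_tmul, hx, hy]
        | tmul e f => simp [mul_assoc, Theta_tmul]
      have h7 := h6 (R.coact c)
      rw [E_L1 Q R v hv E hE] at h7
      simp only [Algebra.TensorProduct.map_tmul, AlgHom.coe_id, id_eq, h7, Theta_tmul,
        Algebra.TensorProduct.tmul_mul_tmul, mul_assoc]

/-- b ↦ E(x¹ b) x² ⊗ x³ -/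
def TT (E : B →ₗ[k] B) : B →ₗ[k] B ⊗[k] H :=
  Theta v E ∘ₗ LinearMap.mulLeft k R.PhiRhoInv ∘ₗ (TensorProduct.mk k B (H ⊗[k] H)).flip 1

theorem TT_apply (E : B →ₗ[k] B) (b : B) : TT Q R v E b = Theta v E (R.PhiRhoInv * (b ⊗ₜ 1)) := by simp [TT]

theorem TT_mul (hv : IsComodAlgMorphismFromH R v) (E : B →ₗ[k] B)
    (hE : IsCanonicalProjection Q R v E) (b : B) (h : H) : TT Q R v E (b * v h) = Q.counit h • TT Q R v E b := by
  rw [TT_apply, TT_apply]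
  generalize R.PhiRhoInv = z
  induction z using ind3 with
  | h0 => simp
  | h2 x y hx hy => simp only [map_add, add_mul, smul_add, hx, hy]
  | h1 p q r =>
    simp [Theta_tmul, ← mul_assoc, E_mul_v Q R v hv E hE, TensorProduct.smul_tmul']

theorem TT_one (hv : IsComodAlgMorphismFromH R v) (E : B →ₗ[k] B)
    (hE : IsCanonicalProjection Q R v E) : TT Q R v E 1 = 1 := by
  rw [TT_apply, phiInv_eq R v hv]
  have h : ∀ z, Theta v E (Algebra.TensorProduct.map v (AlgHom.id k (H ⊗[k] H)) z * (1 ⊗ₜ 1))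
      = Algebra.TensorProduct.map v (AlgHom.id k H)
        (el Q.toQuasiBialgebra (H ⊗[k] H) z) := by
    intro z
    induction z using ind3 with
    | h0 => simp
    | h2 x y hx hy => simp only [map_add, add_mul, hx, hy]
    | h1 p q r =>
      have := E_mul_v Q R v hv E hE 1 p
      rw [one_mul, E_one Q R v hv E hE] at this
      simp [Theta_tmul, this, TensorProduct.smul_tmul']
  rw [h, inv_of_one _ _ (e1_Phi _), map_one]

theorem TT_coact (hv : IsComodAlgMorphismFromH R v) (E : B →ₗ[k] B)
    (hE : IsCanonicalProjection Q R v E) (c b : B) :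
    mulMap (TT Q R v E) (R.coact.comp v) b (R.coact c) = R.coact c * TT Q R v E b := by
  have h : ∀ t : B ⊗[k] H, mulMap (TT Q R v E) (R.coact.comp v) b t
      = Theta v E (R.PhiRhoInv * ((Algebra.TensorProduct.map (AlgHom.id k B) Q.comul) t
        * (b ⊗ₜ 1))) := by
    intro t
    induction t using TensorProduct.induction_on with
    | zero => simp
    | add x y hx hy => simp only [map_add, add_mul, mul_add, hx, hy]
    | tmul x y =>
      simp only [mulMap_tmul, TT_apply, Algebra.TensorProduct.map_tmul, AlgHom.coe_id, id_eq,
        Algebra.TensorProduct.tmul_mul_tmul, mul_one, AlgHom.comp_apply, hv.1]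
      rw [← Theta_mul]
  rw [h, ← mul_assoc, coassoc', mul_assoc, Theta_left Q R v hv E hE, TT_apply]

theorem key (hv : IsComodAlgMorphismFromH R v) (E : B →ₗ[k] B)
    (hE : IsCanonicalProjection Q R v E) (b : B) : R.coact (E b) = Theta v E (R.PhiRhoInv * (b ⊗ₜ 1)) := by
  have h := vanish Q R v hv (R.coact.toLinearMap ∘ₗ E - TT Q R v E)
    (by simp [E_one Q R v hv E hE, TT_one Q R v hv E hE])
    (by intro b h; simp [E_mul_v Q R v hv E hE, TT_mul Q R v hv E hE, smul_sub])
    (by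
      intro c b
      have h1 : ∀ t, mulMap (R.coact.toLinearMap ∘ₗ E - TT Q R v E) (R.coact.comp v) b t
          = R.coact (mulMap E v b t) - mulMap (TT Q R v E) (R.coact.comp v) b t := by
        intro t
        induction t using TensorProduct.induction_on with
        | zero => simp
        | add x y hx hy => simp only [map_add, hx, hy]; abel
        | tmul x y => simp [sub_mul]
      rw [h1, E_L1 Q R v hv E hE, TT_coact Q R v hv E hE]
      simp [mul_sub]) b
  rw [← TT_apply]
  simpa [sub_eq_zero] using h

end E

end

end QH

/-- `Ψ` intertwines the coactions: `ρ(a v(h)) = (x¹ ▷ a)v(x²h₁) ⊗ x³h₂` for `a` in the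
coinvariants `A = E(B)`. -/
theorem statement15 {k H B : Type*} [Field k] [Ring H] [Algebra k H]
    [Ring B] [Algebra k B] (Q : QuasiHopfAlgebra k H)
    (R : RightComoduleAlgebra Q.toQuasiBialgebra B)
    (v : H →ₐ[k] B) (hv : IsComodAlgMorphismFromH R v)
    (E : B →ₗ[k] B) (hE : IsCanonicalProjection Q R v E) :
    ∀ a ∈ LinearMap.range E, ∀ (h : H) (n : ℕ) (x1 x2 x3 : Fin n → H),
      Q.PhiInv = ∑ i, x1 i ⊗ₜ[k] (x2 i ⊗ₜ[k] x3 i) →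
      ∀ (m : ℕ) (d1 d2 : Fin m → H), Q.comul h = ∑ j, d1 j ⊗ₜ[k] d2 j →
      R.coact (a * v h)
        = ∑ i, ∑ j, (E (v (x1 i) * a) * v (x2 i * d1 j)) ⊗ₜ[k] (x3 i * d2 j) := by
  rintro a ⟨b, rfl⟩ h n x1 x2 x3 hx m d1 d2 hd
  rw [map_mul, QH.key Q R v hv E hE b, hv.1, hd, QH.phiInv_eq R v hv, hx]
  simp only [map_sum, Finset.sum_mul, Finset.mul_sum, Algebra.TensorProduct.map_tmul,
    Algebra.TensorProduct.tmul_mul_tmul, QH.Theta_tmul, AlgHom.coe_id, id_eq, mul_one,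
    QH.E_mul_E Q R v hv E hE, map_mul, mul_assoc]
  rw [Finset.sum_comm]
end

section
/- Let H be a quasi-bialgebra and A a left H-module algebra. Then the map j : H → A#H, j(h) = 1_A#h, is a morphism of right H-comodule algebras, where A#H carries the right H-comodule algebra structure ρ(a#h) = (x¹·a # x²h₁)⊗x³h₂ and Φ_ρ = (1#X¹)⊗X²⊗X³, and H is a right H-comodule algebra over itself via ρ = Δ and Φ_ρ = Φ. -/
open TensorProduct BigOperators

/-- A left `H`-module algebra over a quasi-bialgebra `Q` (the Sweedler-type identities are
stated universally over finite representations of the relevant tensors). -/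
structure LeftModuleAlgebra {k H : Type*} [Field k] [Ring H] [Algebra k H]
    (Q : QuasiBialgebra k H) (A : Type*) [AddCommGroup A] [Module k A] where
  act : H →ₗ[k] A →ₗ[k] A
  act_one : ∀ a : A, act 1 a = a
  act_mul : ∀ (g h : H) (a : A), act (g * h) a = act g (act h a)
  mul : A →ₗ[k] A →ₗ[k] A
  one : A
  one_mul : ∀ a : A, mul one a = a
  mul_one : ∀ a : A, mul a one = a
  act_unit : ∀ h : H, act h one = Q.counit h • one
  mul_assoc : ∀ (a b c : A) (n : ℕ) (X1 X2 X3 : Fin n → H),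
    Q.Phi = ∑ i, X1 i ⊗ₜ[k] (X2 i ⊗ₜ[k] X3 i) →
    mul (mul a b) c = ∑ i, mul (act (X1 i) a) (mul (act (X2 i) b) (act (X3 i) c))
  act_distrib : ∀ (h : H) (a b : A) (m : ℕ) (d1 d2 : Fin m → H),
    Q.comul h = ∑ j, d1 j ⊗ₜ[k] d2 j →
    act h (mul a b) = ∑ j, mul (act (d1 j) a) (act (d2 j) b)

/-- `mulB` is the multiplication of the smash product `A # H`:
`(a # h)(a' # h') = (x¹·a)(x²h₁·a') # x³h₂h'`. -/
def IsSmashMul {k H A : Type*} [Field k] [Ring H] [Algebra k H]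
    [AddCommGroup A] [Module k A] (Q : QuasiBialgebra k H) (M : LeftModuleAlgebra Q A)
    (mulB : (A ⊗[k] H) →ₗ[k] (A ⊗[k] H) →ₗ[k] (A ⊗[k] H)) : Prop :=
  ∀ (a a' : A) (h h' : H) (n : ℕ) (x1 x2 x3 : Fin n → H),
    Q.PhiInv = ∑ i, x1 i ⊗ₜ[k] (x2 i ⊗ₜ[k] x3 i) →
    ∀ (m : ℕ) (d1 d2 : Fin m → H), Q.comul h = ∑ j, d1 j ⊗ₜ[k] d2 j →
    mulB (a ⊗ₜ[k] h) (a' ⊗ₜ[k] h')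
      = ∑ i, ∑ j, (M.mul (M.act (x1 i) a) (M.act (x2 i * d1 j) a')) ⊗ₜ[k] (x3 i * d2 j * h')

/-- `coactB` is the right `H`-coaction of the smash product `A # H`:
`ρ(a # h) = (x¹·a # x²h₁) ⊗ x³h₂`. -/
def IsSmashCoact {k H A : Type*} [Field k] [Ring H] [Algebra k H]
    [AddCommGroup A] [Module k A] (Q : QuasiBialgebra k H) (M : LeftModuleAlgebra Q A)
    (coactB : (A ⊗[k] H) →ₗ[k] (A ⊗[k] H) ⊗[k] H) : Prop :=
  ∀ (a : A) (h : H) (n : ℕ) (x1 x2 x3 : Fin n → H),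
    Q.PhiInv = ∑ i, x1 i ⊗ₜ[k] (x2 i ⊗ₜ[k] x3 i) →
    ∀ (m : ℕ) (d1 d2 : Fin m → H), Q.comul h = ∑ j, d1 j ⊗ₜ[k] d2 j →
    coactB (a ⊗ₜ[k] h) = ∑ i, ∑ j, ((M.act (x1 i) a) ⊗ₜ[k] (x2 i * d1 j)) ⊗ₜ[k] (x3 i * d2 j)

namespace QB16
variable {k H : Type*} [Field k] [Ring H] [Algebra k H]

/-- `ε ⊗ id` on `H ⊗ V`. -/
noncomputable def el (Q : QuasiBialgebra k H) (V : Type*) [Ring V] [Algebra k V] :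
    H ⊗[k] V →ₐ[k] V :=
  (Algebra.TensorProduct.lid k V).toAlgHom.comp
    (Algebra.TensorProduct.map Q.counit (AlgHom.id k V))

lemma el_tmul (Q : QuasiBialgebra k H) (V : Type*) [Ring V] [Algebra k V] (h : H) (v : V) :
    el Q V (h ⊗ₜ[k] v) = Q.counit h • v := by
  simp [el]

lemma el_comul (Q : QuasiBialgebra k H) (h : H) : el Q H (Q.comul h) = h := by
  simp [el, Q.counit_comul_left]

/-- `id ⊗ ε ⊗ id`. -/
noncomputable def em (Q : QuasiBialgebra k H) : H ⊗[k] (H ⊗[k] H) →ₐ[k] H ⊗[k] H :=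
  Algebra.TensorProduct.map (AlgHom.id k H) (el Q H)

lemma em_Phi (Q : QuasiBialgebra k H) : em Q Q.Phi = 1 := by
  have h : ∀ T : H ⊗[k] (H ⊗[k] H), em Q T =
      (Algebra.TensorProduct.map (AlgHom.id k H) (Algebra.TensorProduct.lid k H).toAlgHom)
        ((Algebra.TensorProduct.map (AlgHom.id k H)
          (Algebra.TensorProduct.map Q.counit (AlgHom.id k H))) T) := by
    intro T
    induction T with
    | zero => simp
    | add x y hx hy => rw [map_add, hx, hy, map_add, map_add]
    | tmul x y => simp [em, el]
  rw [h, Q.counit_Phi, map_one]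

lemma e2_eq (Q : QuasiBialgebra k H) (T : H ⊗[k] (H ⊗[k] H)) :
    el Q H (el Q (H ⊗[k] H) T) = el Q H (em Q T) := by
  induction T with
  | zero => simp
  | add x y hx hy => simp only [map_add, hx, hy]
  | tmul x y => simp [em, el_tmul]

lemma e2_Phi (Q : QuasiBialgebra k H) : el Q H (el Q (H ⊗[k] H) Q.Phi) = 1 := by
  rw [e2_eq, em_Phi, map_one]

lemma el_assoc (Q : QuasiBialgebra k H) (V : Type*) [Ring V] [Algebra k V]
    (D : H ⊗[k] H) (c : V) :
    el Q (H ⊗[k] V) (Algebra.TensorProduct.assoc k k k H H V (D ⊗ₜ[k] c))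
      = el Q H D ⊗ₜ[k] c := by
  induction D with
  | zero => simp
  | add x y hx hy => simp only [map_add, add_tmul, hx, hy]
  | tmul x y => simp [el_tmul, smul_tmul']

lemma el_Phi (Q : QuasiBialgebra k H) : el Q (H ⊗[k] H) Q.Phi = 1 := by
  have h := congrArg (fun t => el Q (H ⊗[k] H) (el Q (H ⊗[k] (H ⊗[k] H)) t)) Q.pentagon
  simp only [map_mul] at h
  have h1 : el Q (H ⊗[k] (H ⊗[k] H)) ((1 : H) ⊗ₜ[k] Q.Phi) = Q.Phi := by
    simp [el_tmul]
  have h2 : ∀ T : H ⊗[k] (H ⊗[k] H), el Q (H ⊗[k] H) (el Q (H ⊗[k] (H ⊗[k] H))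
      ((Algebra.TensorProduct.map (AlgHom.id k H)
          (((Algebra.TensorProduct.assoc k k k H H H).toAlgHom).comp
            (Algebra.TensorProduct.map Q.comul (AlgHom.id k H)))) T))
      = el Q (H ⊗[k] H) T := by
    intro T
    induction T with
    | zero => simp
    | add x y hx hy => simp only [map_add, hx, hy]
    | tmul x y =>
      induction y with
      | zero => simp
      | add x y hx hy => simp only [tmul_add, map_add, hx, hy]
      | tmul y z =>
        have := el_assoc Q H (Q.comul y) z
        rw [el_comul] at this
        simp [el_tmul, this]
  have h3 : ∀ T : H ⊗[k] (H ⊗[k] H), el Q (H ⊗[k] H) (el Q (H ⊗[k] (H ⊗[k] H))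
      ((Algebra.TensorProduct.map (AlgHom.id k H)
          (Algebra.TensorProduct.map (AlgHom.id k H)
            (Algebra.TensorProduct.includeLeft : H →ₐ[k] H ⊗[k] H))) T))
      = (Algebra.TensorProduct.includeLeft : H →ₐ[k] H ⊗[k] H)
          (el Q H (el Q (H ⊗[k] H) T)) := by
    intro T
    induction T with
    | zero => simp
    | add x y hx hy => simp only [map_add, hx, hy]
    | tmul x y =>
      induction y with
      | zero => simp
      | add x y hx hy => simp only [tmul_add, map_add, hx, hy]
      | tmul y z => simp [el_tmul, smul_tmul']
  have h4 : ∀ T : H ⊗[k] (H ⊗[k] H), el Q (H ⊗[k] H) (el Q (H ⊗[k] (H ⊗[k] H))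
      ((Algebra.TensorProduct.map (AlgHom.id k H)
          (Algebra.TensorProduct.map (AlgHom.id k H) Q.comul)) T))
      = Q.comul (el Q H (el Q (H ⊗[k] H) T)) := by
    intro T
    induction T with
    | zero => simp
    | add x y hx hy => simp only [map_add, hx, hy]
    | tmul x y =>
      induction y with
      | zero => simp
      | add x y hx hy => simp only [tmul_add, map_add, hx, hy]
      | tmul y z => simp [el_tmul]
  have h5 : ∀ T : H ⊗[k] (H ⊗[k] H), el Q (H ⊗[k] (H ⊗[k] H))
      ((Algebra.TensorProduct.assoc k k k H H (H ⊗[k] H))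
          ((Algebra.TensorProduct.map Q.comul (AlgHom.id k (H ⊗[k] H))) T)) = T := by
    intro T
    induction T with
    | zero => simp
    | add x y hx hy => simp only [map_add, hx, hy]
    | tmul x y =>
      have := el_assoc Q (H ⊗[k] H) (Q.comul x) y
      rw [el_comul] at this
      simpa using this
  rw [h1, h2, h3, h4, h5, e2_Phi, map_one, map_one, mul_one, one_mul] at h
  have h6 : el Q (H ⊗[k] H) Q.Phi * el Q (H ⊗[k] H) Q.PhiInv = 1 := by
    rw [← map_mul, Q.Phi_mul_inv, map_one]
  calc el Q (H ⊗[k] H) Q.Phi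
      = (el Q (H ⊗[k] H) Q.Phi * el Q (H ⊗[k] H) Q.Phi) * el Q (H ⊗[k] H) Q.PhiInv := by
        rw [mul_assoc, h6, mul_one]
    _ = 1 := by rw [h, h6]

lemma inv_one (Q : QuasiBialgebra k H) {V : Type*} [Ring V] [Algebra k V]
    (f : H ⊗[k] (H ⊗[k] H) →ₐ[k] V) (hf : f Q.Phi = 1) : f Q.PhiInv = 1 := by
  have := congrArg f Q.Phi_mul_inv
  rwa [map_mul, hf, one_mul, map_one] at this

lemma rep2 (T : H ⊗[k] H) : ∃ (n : ℕ) (x y : Fin n → H), T = ∑ i, x i ⊗ₜ[k] y i := by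
  obtain ⟨n, x, y, h⟩ := TensorProduct.exists_sum_tmul_eq T
  exact ⟨n, x, y, h⟩

lemma rep3 (T : H ⊗[k] (H ⊗[k] H)) : ∃ (n : ℕ) (x y z : Fin n → H),
    T = ∑ i, x i ⊗ₜ[k] (y i ⊗ₜ[k] z i) := by
  induction T with
  | zero => exact ⟨0, Fin.elim0, Fin.elim0, Fin.elim0, by simp⟩
  | add a b ha hb =>
    obtain ⟨n, x, y, z, h⟩ := ha
    obtain ⟨n', x', y', z', h'⟩ := hb
    refine ⟨n + n', Fin.append x x', Fin.append y y', Fin.append z z', ?_⟩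
    rw [Fin.sum_univ_add, h, h']
    simp
  | tmul a b =>
    obtain ⟨n, y, z, h⟩ := rep2 b
    exact ⟨n, fun _ => a, y, z, by rw [h, tmul_sum]⟩

end QB16

/-- The canonical map `j : H → A # H`, `j(h) = 1_A # h`, is a morphism of right
`H`-comodule algebras: it is multiplicative, unital, and compatible with the coactions
(the compatibility `Φ_ρ = (j ⊗ id ⊗ id)(Φ)` holds by definition of the structure of
`A # H`). -/
theorem statement16 {k H A : Type*} [Field k] [Ring H] [Algebra k H]
    [AddCommGroup A] [Module k A] (Q : QuasiBialgebra k H)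
    (M : LeftModuleAlgebra Q A)
    (mulB : (A ⊗[k] H) →ₗ[k] (A ⊗[k] H) →ₗ[k] (A ⊗[k] H))
    (hmulB : IsSmashMul Q M mulB)
    (coactB : (A ⊗[k] H) →ₗ[k] (A ⊗[k] H) ⊗[k] H)
    (hcoactB : IsSmashCoact Q M coactB) :
    -- `j` is multiplicative:
    (∀ g h : H, mulB (M.one ⊗ₜ[k] g) (M.one ⊗ₜ[k] h) = M.one ⊗ₜ[k] (g * h))
    -- `j(1) = 1_A # 1` is the unit of `A # H`:
    ∧ (∀ b : A ⊗[k] H,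
        mulB (M.one ⊗ₜ[k] (1 : H)) b = b ∧ mulB b (M.one ⊗ₜ[k] (1 : H)) = b)
    -- `j` intertwines the coactions: `ρ(j(h)) = (j ⊗ id)(Δ(h))`:
    ∧ (∀ (h : H) (m : ℕ) (d1 d2 : Fin m → H),
        Q.comul h = ∑ j, d1 j ⊗ₜ[k] d2 j →
        coactB (M.one ⊗ₜ[k] h) = ∑ j, (M.one ⊗ₜ[k] d1 j) ⊗ₜ[k] d2 j) := by
  obtain ⟨n, x1, x2, x3, hx⟩ := QB16.rep3 Q.PhiInv
  have hL := QB16.inv_one Q (QB16.el Q (H ⊗[k] H)) (QB16.el_Phi Q)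
  have hM := QB16.inv_one Q (QB16.em Q) (QB16.em_Phi Q)
  have h2 : QB16.el Q H (QB16.el Q (H ⊗[k] H) Q.PhiInv) = 1 := by rw [hL, map_one]
  rw [hx] at hL hM h2
  simp only [map_sum, map_smul, QB16.el_tmul] at hL h2
  simp only [map_sum, QB16.em, Algebra.TensorProduct.map_tmul, QB16.el_tmul,
    AlgHom.coe_id, id_eq] at hM
  have hd : ∀ (h : H) (m : ℕ) (d1 d2 : Fin m → H), Q.comul h = ∑ j, d1 j ⊗ₜ[k] d2 j →
      ∑ j, Q.counit (d1 j) • d2 j = h := by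
    intro h m d1 d2 e
    have := QB16.el_comul Q h
    rw [e] at this
    simpa only [map_sum, QB16.el_tmul] using this
  have hone : Q.comul 1 = ∑ j : Fin 1, (fun _ => (1 : H)) j ⊗ₜ[k] (fun _ => (1 : H)) j := by
    simp [Algebra.TensorProduct.one_def]
  refine ⟨?_, ?_, ?_⟩
  · intro g h
    obtain ⟨m, d1, d2, e⟩ := QB16.rep2 (Q.comul g)
    rw [hmulB _ _ _ _ n x1 x2 x3 hx m d1 d2 e]
    have key : g * h = (∑ i, Q.counit (x1 i) • Q.counit (x2 i) • x3 i)
        * (∑ j, Q.counit (d1 j) • d2 j) * h := by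
      rw [h2, hd g m d1 d2 e, one_mul]
    rw [key]
    rw [Finset.sum_mul_sum]
    simp only [Finset.sum_mul, tmul_sum]
    refine Finset.sum_congr rfl fun i _ => Finset.sum_congr rfl fun j _ => ?_
    simp only [M.act_unit, map_mul, map_smul, LinearMap.smul_apply, M.one_mul, smul_tmul,
      smul_mul_assoc, mul_smul_comm, mul_smul]
    rw [smul_comm (Q.counit (x1 i)) (Q.counit (d1 j))]
  · intro b
    constructor
    · induction b with
      | zero => simp
      | add x y hx hy => rw [map_add, hx, hy]
      | tmul a h =>
        rw [hmulB _ _ _ _ n x1 x2 x3 hx 1 _ _ hone]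
        have := congrArg (TensorProduct.map (M.act.flip a) (LinearMap.mulRight k h)) hL
        simp only [map_sum, map_smul, Algebra.TensorProduct.one_def, TensorProduct.map_tmul,
          LinearMap.flip_apply, LinearMap.mulRight_apply, M.act_one, one_mul] at this
        rw [← this]
        simp [M.act_unit, M.one_mul, smul_tmul']
    · induction b with
      | zero => simp
      | add x y hx hy => rw [map_add, LinearMap.add_apply, hx, hy]
      | tmul a h =>
        obtain ⟨m, d1, d2, e⟩ := QB16.rep2 (Q.comul h)
        rw [hmulB _ _ _ _ n x1 x2 x3 hx m d1 d2 e]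
        have := congrArg (TensorProduct.map (M.act.flip a) (LinearMap.mulRight k h)) hM
        simp only [map_sum, Algebra.TensorProduct.one_def, TensorProduct.map_tmul,
          LinearMap.flip_apply, LinearMap.mulRight_apply, M.act_one, one_mul] at this
        rw [← this]
        refine Finset.sum_congr rfl fun i _ => ?_
        conv_rhs => rw [← hd h m d1 d2 e]
        rw [Finset.mul_sum, tmul_sum]
        refine Finset.sum_congr rfl fun j _ => ?_
        simp only [M.act_unit, map_mul, map_smul, M.mul_one, smul_tmul,
          smul_mul_assoc, mul_smul_comm, mul_smul, _root_.mul_one]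
  · intro h m d1 d2 e
    rw [hcoactB _ _ n x1 x2 x3 hx m d1 d2 e]
    have := congrArg (fun t => TensorProduct.map (TensorProduct.mk k A H M.one)
      (LinearMap.id : H →ₗ[k] H) (t * ∑ j, d1 j ⊗ₜ[k] d2 j)) hL
    simp only [one_mul, Finset.sum_mul_sum, map_sum, smul_mul_assoc, map_smul,
      Algebra.TensorProduct.tmul_mul_tmul, TensorProduct.map_tmul, TensorProduct.mk_apply,
      LinearMap.id_apply] at this
    rw [← this]
    simp only [M.act_unit, smul_tmul']
end
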